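/- Let κ be a partition with at most n parts and assume the symmetric Macdonald polynomial P_κ exists. Then P_κ(1,t,t^2,…,t^{n−1})·h_κ(q,t) = t^{l(κ)}·b_κ(q,t), as an identity in ℚ(q,t), where P_κ(1,t,…,t^{n−1}) denotes the evaluation of P_κ at x_i=t^{i−1} for 1≤i≤n. -/

import Mathlib

/- STATEMENT 19: for a partition κ, P_κ(1,t,t^2,…,t^{n−1})·h_κ(q,t) = t^{l(κ)}·b_κ(q,t). -/

open Finset MvPolynomial

namespace Stmt19

/-- leg colength l'_η(i) -/
def legCo (n : ℕ) (η : Fin n → ℕ) (i : Fin n) : ℕ :=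
  (univ.filter fun k => k < i ∧ η i ≤ η k).card +
  (univ.filter fun k => i < k ∧ η i < η k).card

/-- leg length l(s) of the node s = (i,j) -/
def leg (n : ℕ) (η : Fin n → ℕ) (i : Fin n) (j : ℕ) : ℕ :=
  (univ.filter fun k => i < k ∧ j ≤ η k ∧ η k ≤ η i).card +
  (univ.filter fun k => k < i ∧ j ≤ η k + 1 ∧ η k + 1 ≤ η i).card

/-- The field K = ℚ(q,t). -/
abbrev K : Type := FractionRing (MvPolynomial (Fin 2) ℚ)

noncomputable def q : K := algebraMap (MvPolynomial (Fin 2) ℚ) K (X 0)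
noncomputable def t : K := algebraMap (MvPolynomial (Fin 2) ℚ) K (X 1)

/-- The polynomial ring K[x_1,…,x_n]. -/
abbrev P (n : ℕ) : Type := MvPolynomial (Fin n) K

/-- the automorphism s_k exchanging x_k and x_{k+1} (0-indexed; identity out of range) -/
noncomputable def sOp (n : ℕ) (k : ℕ) : P n →ₗ[K] P n :=
  if h : k + 1 < n then
    (rename (Equiv.swap (⟨k, Nat.lt_of_succ_lt h⟩ : Fin n) ⟨k + 1, h⟩)).toLinearMap
  else LinearMap.id

/-- τ_1 : x_1 ↦ qv·x_1 (the first variable is 0-indexed) -/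
noncomputable def tauOp (n : ℕ) (qv : K) : P n →ₗ[K] P n :=
  (aeval (fun j : Fin n => if (j : ℕ) = 0 then C qv * X j else X j)).toLinearMap

/-- ω := s_{n−1}⋯s_2 s_1 τ_1 -/
noncomputable def omegaOp (n : ℕ) (qv : K) : P n →ₗ[K] P n :=
  (List.range (n - 1)).foldl (fun acc k => sOp n k ∘ₗ acc) (tauOp n qv)

/-- The defining property of the Demazure–Lustig operators T_k (0-indexed), for the
parameter value tv: (x_k − x_{k+1})·(T_k f) = (x_k − x_{k+1})·tv·f
+ (tv·x_k − x_{k+1})·(s_k f − f), i.e. T_k f is the polynomial quotient from the usual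
definition. -/
def IsDL (n : ℕ) (tv : K) (T : ℕ → P n →ₗ[K] P n) : Prop :=
  ∀ k, ∀ hk : k + 1 < n, ∀ f : P n,
    (X (⟨k, Nat.lt_of_succ_lt hk⟩ : Fin n) - X ⟨k + 1, hk⟩) * T k f =
      (X (⟨k, Nat.lt_of_succ_lt hk⟩ : Fin n) - X ⟨k + 1, hk⟩) * (C tv * f) +
      (C tv * X (⟨k, Nat.lt_of_succ_lt hk⟩ : Fin n) - X ⟨k + 1, hk⟩) * (sOp n k f - f)

/-- T_k⁻¹ = tv⁻¹ − 1 + tv⁻¹ T_k -/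
noncomputable def Tinv (n : ℕ) (tv : K) (T : ℕ → P n →ₗ[K] P n) (k : ℕ) : P n →ₗ[K] P n :=
  tv⁻¹ • LinearMap.id - LinearMap.id + tv⁻¹ • T k

/-- The Cherednik operator Y_i (0-indexed i):
Y_i = tv^{i+1−n}·T_i⋯T_{n−2}·ω·T_0⁻¹⋯T_{i−1}⁻¹. -/
noncomputable def Yop (n : ℕ) (qv tv : K) (T : ℕ → P n →ₗ[K] P n) (i : Fin n) :
    P n →ₗ[K] P n :=
  (tv ^ (n - 1 - (i : ℕ)))⁻¹ •
    (((List.range' (i : ℕ) (n - 1 - (i : ℕ))).foldr (fun k acc => T k ∘ₗ acc) LinearMap.id) ∘ₗ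
      omegaOp n qv ∘ₗ
      ((List.range (i : ℕ)).foldr (fun k acc => Tinv n tv T k ∘ₗ acc) LinearMap.id))

/-- the decreasing rearrangement η⁺ of η -/
noncomputable def sortDesc (n : ℕ) (η : Fin n → ℕ) : Fin n → ℕ :=
  fun i => η (Tuple.sort η i.rev)

/-- dominance order on n-tuples (of equal sum) -/
def domLE (n : ℕ) (ν μ : Fin n → ℕ) : Prop :=
  (∑ i, ν i = ∑ i, μ i) ∧
  ∀ p : Fin n, ∑ i ∈ univ.filter (· ≤ p), ν i ≤ ∑ i ∈ univ.filter (· ≤ p), μ i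

def domLT (n : ℕ) (ν μ : Fin n → ℕ) : Prop := domLE n ν μ ∧ ν ≠ μ

/-- the order ≺ : ν ≺ η iff ν⁺ < η⁺, or ν⁺ = η⁺ and ν < η (dominance order) -/
noncomputable def prec (n : ℕ) (ν η : Fin n → ℕ) : Prop :=
  domLT n (sortDesc n ν) (sortDesc n η) ∨ (sortDesc n ν = sortDesc n η ∧ domLT n ν η)

/-- E is the non-symmetric Macdonald polynomial for the composition η (with parameters
qv, tv and Demazure–Lustig operators T): it has the triangular form
E = x^η + Σ_{ν≺η} b_{ην} x^ν and satisfies Y_i E = qv^{η_i}·tv^{−l'_η(i)}·E for all i. -/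
noncomputable def IsNSMac (n : ℕ) (qv tv : K) (T : ℕ → P n →ₗ[K] P n)
    (η : Fin n → ℕ) (E : P n) : Prop :=
  coeff (Finsupp.equivFunOnFinite.symm η) E = 1 ∧
  (∀ ν : Fin n →₀ ℕ, coeff ν E ≠ 0 → (ν : Fin n → ℕ) = η ∨ prec n (ν : Fin n → ℕ) η) ∧
  ∀ i : Fin n, Yop n qv tv T i E = (qv ^ η i / tv ^ legCo n η i) • E

/-- Pp is the symmetric Macdonald polynomial for the partition κ (with parameters qv, tv
and Demazure–Lustig operators T): it is symmetric, of the triangular form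
m_κ + Σ_{μ<κ} u_{κμ} m_μ, and satisfies (Σ_i Y_i) Pp = (Σ_i qv^{κ_i}·tv^{1−i}) Pp. -/
noncomputable def IsSymMac (n : ℕ) (qv tv : K) (T : ℕ → P n →ₗ[K] P n)
    (κ : Fin n → ℕ) (Pp : P n) : Prop :=
  Pp.IsSymmetric ∧
  coeff (Finsupp.equivFunOnFinite.symm κ) Pp = 1 ∧
  (∀ ν : Fin n →₀ ℕ, coeff ν Pp ≠ 0 →
    sortDesc n (ν : Fin n → ℕ) = κ ∨ domLT n (sortDesc n (ν : Fin n → ℕ)) κ) ∧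
  (∑ i : Fin n, Yop n qv tv T i) Pp = (∑ i : Fin n, qv ^ κ i * (tv ^ (i : ℕ))⁻¹) • Pp

/-- b_κ(q,t) = ∏_s (1 − q^{a'(s)} t^{n−l'(s)}) -/
noncomputable def bP (n : ℕ) (κ : Fin n → ℕ) : K :=
  ∏ i : Fin n, ∏ j ∈ Finset.Icc 1 (κ i), (1 - q ^ (j - 1) * t ^ (n - legCo n κ i))

/-- h_κ(q,t) = ∏_s (1 − q^{a(s)} t^{l(s)+1}) -/
noncomputable def hP (n : ℕ) (κ : Fin n → ℕ) : K :=
  ∏ i : Fin n, ∏ j ∈ Finset.Icc 1 (κ i), (1 - q ^ (κ i - j) * t ^ (leg n κ i j + 1))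

/-- l(κ) = Σ_s l(s) -/
def lTot (n : ℕ) (κ : Fin n → ℕ) : ℕ :=
  ∑ i : Fin n, ∑ j ∈ Finset.Icc 1 (κ i), leg n κ i j

end Stmt19

/-!
Nonsymmetric Macdonald polynomials are built from `1` by adding a box to the first row and moving
that row to the end, and by exchanging two adjacent rows with the intertwiners of the Hecke algebra.
At the point `(1, t, …, t ^ (n - 1))` every `T k` acts as multiplication by `t`, so both steps
multiply the value by an explicit factor, and these factors match the change of the hook and box
products of the composition.

The Hecke symmetrizer maps the nonsymmetric polynomial of the increasing rearrangement of `κ` to a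
symmetric eigenfunction of `∑ i, Y i`. The eigenvalue determines the partition because `q` and `t`
are independent, so this eigenfunction is proportional to `P_κ`, with a factor read off at `x ^ κ`.
The remaining quotient of hook products telescopes along the rows of `κ`.
-/

open Stmt19

namespace MacdonaldEvaluation

section DemazureLusztig

variable {N : ℕ} {tv : K} {T : ℕ → P (N + 1) →ₗ[K] P (N + 1)}

/-- The transposition of `k` and `k + 1`, exchanging two adjacent positions. -/
abbrev adj (k : Fin N) : Equiv.Perm (Fin (N + 1)) := Equiv.swap k.castSucc k.succ

lemma adj_apply_of_ne {k : Fin N} {i : Fin (N + 1)} (h₁ : (i : ℕ) ≠ k) (h₂ : (i : ℕ) ≠ k + 1) :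
    adj k i = i :=
  Equiv.swap_apply_of_ne_of_ne (Fin.ne_of_val_ne h₁) (Fin.ne_of_val_ne h₂)

lemma sOp_eq_rename (k : Fin N) (f : P (N + 1)) : sOp (N + 1) k f = rename (adj k) f := by
  rw [sOp, dif_pos (show (k : ℕ) + 1 < N + 1 by lia)]
  rfl

lemma X_sub_X_ne_zero {i j : Fin (N + 1)} (h : i ≠ j) : (X i - X j : P (N + 1)) ≠ 0 :=
  sub_ne_zero.2 fun hij => h (X_injective hij)

lemma X_sub_X_mul_T (hT : IsDL (N + 1) tv T) (k : Fin N) (f : P (N + 1)) :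
    (X k.castSucc - X k.succ) * T k f =
      (1 - C tv) * X k.succ * f +
        (C tv * X k.castSucc - X k.succ) * rename (adj k) f := by
  have h := hT k (by lia) f
  rw [sOp_eq_rename] at h
  change (X k.castSucc - X k.succ) * _ =
    (X k.castSucc - X k.succ) * _ + (_ * X k.castSucc - X k.succ) * _ at h
  linear_combination h

lemma T_eq_of_X_sub_X_mul (hT : IsDL (N + 1) tv T) {k : Fin N} {f g : P (N + 1)}
    (h : (X k.castSucc - X k.succ) * g = (1 - C tv) * X k.succ * f +
      (C tv * X k.castSucc - X k.succ) * rename (adj k) f) :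
    T k f = g :=
  mul_left_cancel₀ (X_sub_X_ne_zero k.castSucc_lt_succ.ne) ((X_sub_X_mul_T hT k f).trans h.symm)

lemma algHom_T {L : Type*} [Field L] [Algebra K L] (hT : IsDL (N + 1) tv T) (k : Fin N)
    (φ : P (N + 1) →ₐ[K] L) (hφ : φ (X k.castSucc) ≠ φ (X k.succ)) (f : P (N + 1)) :
    φ (T k f) = ((1 - algebraMap K L tv) * φ (X k.succ) * φ f +
      (algebraMap K L tv * φ (X k.castSucc) - φ (X k.succ)) * φ (rename (adj k) f)) /
        (φ (X k.castSucc) - φ (X k.succ)) := by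
  have h := congrArg φ (X_sub_X_mul_T hT k f)
  simp only [map_mul, map_sub, map_add, map_one, ← algebraMap_eq, AlgHom.commutes] at h
  rw [eq_div_iff (sub_ne_zero.2 hφ), mul_comm, h]

/-- The embedding of polynomials into rational functions preceded by a permutation of the
variables. Relations between the `T k` can be checked after applying it. -/
noncomputable def toFrac (σ : Equiv.Perm (Fin (N + 1))) :
    P (N + 1) →ₐ[K] FractionRing (P (N + 1)) :=
  (IsScalarTower.toAlgHom K (P (N + 1)) (FractionRing (P (N + 1)))).comp (rename σ)

lemma toFrac_one_injective : Function.Injective (toFrac (1 : Equiv.Perm (Fin (N + 1)))) := by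
  have h := IsFractionRing.injective (P (N + 1)) (FractionRing (P (N + 1)))
  intro f g hfg
  simpa [toFrac, rename_id_apply] using h.eq_iff.1 (by simpa [toFrac] using hfg)

lemma toFrac_X (σ : Equiv.Perm (Fin (N + 1))) (i : Fin (N + 1)) :
    toFrac σ (X i) = toFrac 1 (X (σ i)) := by
  simp [toFrac]

lemma toFrac_rename (σ τ : Equiv.Perm (Fin (N + 1))) (f : P (N + 1)) :
    toFrac σ (rename τ f) = toFrac (σ * τ) f := by
  simp [toFrac, rename_rename]

lemma toFrac_T (hT : IsDL (N + 1) tv T) (k : Fin N) (σ : Equiv.Perm (Fin (N + 1)))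
    (f : P (N + 1)) :
    toFrac σ (T k f) = ((1 - algebraMap K _ tv) * toFrac 1 (X (σ k.succ)) * toFrac σ f +
      (algebraMap K _ tv * toFrac 1 (X (σ k.castSucc)) - toFrac 1 (X (σ k.succ))) *
        toFrac (σ * adj k) f) /
        (toFrac 1 (X (σ k.castSucc)) - toFrac 1 (X (σ k.succ))) := by
  have hne : toFrac σ (X k.castSucc) ≠ toFrac σ (X k.succ) := by
    rw [toFrac_X σ, toFrac_X σ]
    exact fun h => k.castSucc_lt_succ.ne (σ.injective (X_injective (toFrac_one_injective h)))
  rw [algHom_T hT k _ hne, toFrac_rename, toFrac_X σ, toFrac_X σ]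

lemma toFrac_X_sub_ne_zero {i j : Fin (N + 1)} (h : i ≠ j) :
    toFrac 1 (X i : P (N + 1)) - toFrac 1 (X j) ≠ 0 :=
  sub_ne_zero.2 fun hij => h (X_injective (toFrac_one_injective hij))

lemma T_T (hT : IsDL (N + 1) tv T) (k : Fin N) (f : P (N + 1)) :
    T k (T k f) = (tv - 1) • T k f + tv • f := by
  have h₁ := toFrac_X_sub_ne_zero k.castSucc_lt_succ.ne
  have h₂ := toFrac_X_sub_ne_zero k.castSucc_lt_succ.ne'
  apply toFrac_one_injective
  simp only [map_add, map_mul, map_sub, map_one, algHom_C, smul_eq_C_mul, toFrac_T hT, one_mul,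
    Equiv.swap_mul_self, Equiv.Perm.one_apply, Equiv.swap_apply_left, Equiv.swap_apply_right]
  field_simp
  ring

lemma T_comm (hT : IsDL (N + 1) tv T) {k l : Fin N} (hkl : (k : ℕ) + 1 < l) (f : P (N + 1)) :
    T k (T l f) = T l (T k f) := by
  have h₁ := toFrac_X_sub_ne_zero k.castSucc_lt_succ.ne
  have h₂ := toFrac_X_sub_ne_zero l.castSucc_lt_succ.ne
  have hk : ∀ i : Fin (N + 1), (l : ℕ) ≤ i → adj k i = i := fun i hi =>
    adj_apply_of_ne (by lia) (by lia)
  have hl : ∀ i : Fin (N + 1), (i : ℕ) ≤ k + 1 → adj l i = i := fun i hi =>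
    adj_apply_of_ne (by lia) (by lia)
  have hadj : adj k * adj l = adj l * adj k :=
    by rw [Equiv.mul_swap_eq_swap_mul, hk _ (by simp), hk _ (by simp)]
  apply toFrac_one_injective
  simp only [toFrac_T hT, one_mul, Equiv.Perm.one_apply, hadj,
    hk l.castSucc (by simp), hk l.succ (by simp), hl k.castSucc (by simp), hl k.succ (by simp)]
  field_simp
  ring

lemma T_braid (hT : IsDL (N + 1) tv T) {k l : Fin N} (hkl : (k : ℕ) + 1 = l)
    (f : P (N + 1)) : T k (T l (T k f)) = T l (T k (T l f)) := by
  have hab : k.castSucc ≠ l.castSucc := Fin.ne_of_val_ne (by simp; lia)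
  have hac : k.castSucc ≠ l.succ := Fin.ne_of_val_ne (by simp; lia)
  have hbc : l.castSucc ≠ l.succ := l.castSucc_lt_succ.ne
  have hk : k.succ = l.castSucc := Fin.ext (by simpa using hkl)
  have hadj : adj k * adj l * adj k = adj l * adj k * adj l := by
    have h := Equiv.swap_mul_swap_mul_swap hbc.symm hac.symm
    rw [Equiv.swap_comm _ k.castSucc, Equiv.swap_comm l.succ,
      Equiv.swap_comm k.castSucc l.succ] at h
    rw [show adj k = Equiv.swap k.castSucc l.castSucc by rw [adj, hk], h]
    exact (Equiv.swap_mul_swap_mul_swap hab hac).symm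
  have hkb : adj k l.castSucc = k.castSucc := by rw [← hk, Equiv.swap_apply_right]
  have hkc : adj k l.succ = l.succ :=
    Equiv.swap_apply_of_ne_of_ne hac.symm (hk ▸ hbc.symm)
  have hla : adj l k.castSucc = k.castSucc := Equiv.swap_apply_of_ne_of_ne hab hac
  have h₁ := toFrac_X_sub_ne_zero hab
  have h₂ := toFrac_X_sub_ne_zero hac
  have h₃ := toFrac_X_sub_ne_zero hbc
  have h₄ := toFrac_X_sub_ne_zero hab.symm
  have h₅ := toFrac_X_sub_ne_zero hbc.symm
  apply toFrac_one_injective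
  simp only [toFrac_T hT, one_mul, Equiv.Perm.one_apply, Equiv.Perm.mul_apply, hadj, hk,
    Equiv.swap_apply_left, Equiv.swap_apply_right, hkb, hkc, hla, Equiv.swap_mul_self]
  generalize toFrac 1 (X k.castSucc) = a at *
  generalize toFrac 1 (X l.castSucc) = b at *
  generalize toFrac 1 (X l.succ) = c at *
  generalize algebraMap K (FractionRing (P (N + 1))) tv = τ at *
  generalize toFrac 1 f = f₀
  generalize toFrac (adj k) f = f₁
  generalize toFrac (adj l) f = f₂
  field_simp
  ring

lemma T_mul_of_rename_eq (hT : IsDL (N + 1) tv T) {k : Fin N} {M : P (N + 1)}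
    (hM : rename (adj k) M = M) (f : P (N + 1)) : T k (M * f) = M * T k f := by
  apply T_eq_of_X_sub_X_mul hT
  rw [map_mul, hM]
  linear_combination M * X_sub_X_mul_T hT k f

lemma T_X_castSucc_mul (hT : IsDL (N + 1) tv T) (k : Fin N) (f : P (N + 1)) :
    T k (X k.castSucc * f) = X k.succ * (T k f + f - C tv * f) := by
  apply T_eq_of_X_sub_X_mul hT
  rw [map_mul, rename_X, Equiv.swap_apply_left]
  linear_combination X k.succ * X_sub_X_mul_T hT k f

lemma T_of_rename_eq (hT : IsDL (N + 1) tv T) {k : Fin N} {f : P (N + 1)}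
    (hf : rename (adj k) f = f) : T k f = C tv * f := by
  apply T_eq_of_X_sub_X_mul hT
  rw [hf]
  ring

lemma T_map (hT : IsDL (N + 1) tv T) {k l : Fin N} {φ : P (N + 1) →ₐ[K] P (N + 1)}
    {c : Fin (N + 1) → K} {ρ : Equiv.Perm (Fin (N + 1))} (hφ : ∀ j, φ (X j) = C (c j) * X (ρ j))
    (hc₀ : c k.castSucc ≠ 0) (hc : c k.succ = c k.castSucc) (h₁ : ρ k.castSucc = l.castSucc)
    (h₂ : ρ k.succ = l.succ) (f : P (N + 1)) : φ (T k f) = T l (φ f) := by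
  have hρ : ∀ j, ρ (adj k j) = adj l (ρ j) := fun j => by
    rw [← Equiv.Perm.mul_apply, Equiv.mul_swap_eq_swap_mul, h₁, h₂, Equiv.Perm.mul_apply]
  have hcj : ∀ j, c (adj k j) = c j := fun j => by
    rw [Equiv.swap_apply_def]
    split_ifs with h h <;> simp only [h, hc]
  have hcomm : φ (rename (adj k) f) = rename (adj l) (φ f) := by
    refine DFunLike.congr_fun (f := φ.comp (rename (adj k))) (g := (rename (adj l)).comp φ)
      (algHom_ext fun j => ?_) f
    simp only [AlgHom.comp_apply, rename_X, hφ, map_mul, rename_C, hρ, hcj]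
  refine (T_eq_of_X_sub_X_mul hT (mul_left_cancel₀ (C_ne_zero.2 hc₀) ?_)).symm
  have h := congrArg φ (X_sub_X_mul_T hT k f)
  simp only [map_mul, map_add, map_sub, map_one, hφ, hcomm, hc, h₁, h₂, algHom_C,
    algebraMap_eq] at h
  linear_combination h

/-- The specialization `x_i = tv ^ i` (with `i` counted from `0`). -/
noncomputable def principalEval (tv : K) : P (N + 1) →ₐ[K] K :=
  aeval fun i => tv ^ (i : ℕ)

lemma principalEval_X (tv : K) (i : Fin (N + 1)) : principalEval tv (X i) = tv ^ (i : ℕ) :=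
  aeval_X _ i

lemma principalEval_T (hT : IsDL (N + 1) tv T) (h₀ : tv ≠ 0) (h₁ : tv ≠ 1) (k : Fin N)
    (f : P (N + 1)) : principalEval tv (T k f) = tv * principalEval tv f := by
  have h : tv ^ (k : ℕ) - tv ^ (k : ℕ) * tv ≠ 0 := by
    rw [← mul_one_sub]
    exact mul_ne_zero (pow_ne_zero _ h₀) (sub_ne_zero.2 h₁.symm)
  have hX : principalEval tv (X k.castSucc) ≠ principalEval tv (X k.succ) := by
    simpa [principalEval_X, pow_succ, sub_ne_zero] using h
  rw [algHom_T hT k _ hX]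
  simp only [principalEval_X, Fin.val_castSucc, Fin.val_succ, pow_succ, Algebra.algebraMap_self,
    RingHom.id_apply]
  field_simp
  ring

end DemazureLusztig

section HeckeAlgebra

/-- The product `g i * g (i + 1) * ⋯ * g (i + m - 1)`. -/
def ascProd {M : Type*} [Monoid M] (g : ℕ → M) (i m : ℕ) : M := ((List.range' i m).map g).prod

lemma ascProd_zero {M : Type*} [Monoid M] (g : ℕ → M) (i : ℕ) : ascProd g i 0 = 1 := rfl

lemma ascProd_succ {M : Type*} [Monoid M] (g : ℕ → M) (i m : ℕ) :
    ascProd g i (m + 1) = g i * ascProd g (i + 1) m := by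
  simp [ascProd, List.range'_succ]

lemma ascProd_succ' {M : Type*} [Monoid M] (g : ℕ → M) (i m : ℕ) :
    ascProd g i (m + 1) = ascProd g i m * g (i + m) := by
  simp [ascProd, List.range'_1_concat]

lemma semiconjBy_ascProd {M : Type*} [Monoid M] {a : M} {f g : ℕ → M} {i j m : ℕ}
    (h : ∀ k < m, SemiconjBy a (f (i + k)) (g (j + k))) :
    SemiconjBy a (ascProd f i m) (ascProd g j m) := by
  induction m with
  | zero => exact .one_right a
  | succ m ih =>
    rw [ascProd_succ', ascProd_succ']
    exact (ih fun k hk => h k (by lia)).mul_right (h m (by lia))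

variable {F R : Type*} [Field F] [Ring R] [Algebra F R]

/-- The relations between the Demazure–Lustig operators `T k`, the rotation `w` and the
multiplications `x i` by the variables: a presentation of the double affine Hecke algebra of
type `A_N`, without the inverse of `w` and of the variables. -/
structure HeckeRelations (N : ℕ) (qv τ : F) (T : ℕ → Rˣ) (w : R) (x : ℕ → R) : Prop where
  braid : ∀ k, k + 1 < N → T k * T (k + 1) * T k = T (k + 1) * T k * T (k + 1)
  comm : ∀ k l, k + 1 < l → l < N → Commute (T k) (T l)
  smul_inv : ∀ k < N, τ • (↑(T k)⁻¹ : R) = T k + (1 - τ) • 1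
  w_mul_T : ∀ k, k + 1 < N → w * T (k + 1) = T k * w
  w_sq_mul_T : ∀ k, k + 1 = N → w * w * T 0 = T k * (w * w)
  x_comm_T : ∀ k, k + 1 < N → Commute (x N) (T k : R)
  T_mul_x : ∀ k < N, T k * x k = τ • (x (k + 1) * ↑(T k)⁻¹)
  w_mul_x : ∀ k < N, w * x (k + 1) = x k * w
  w_mul_x_zero : w * x 0 = qv • (x N * w)

namespace HeckeRelations

variable {N : ℕ} {qv τ : F} {T : ℕ → Rˣ} {w : R} {x : ℕ → R}

/-- The Cherednik operators, written in terms of the `T k` and the rotation `w`. -/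
def cherednik (N : ℕ) (τ : F) (T : ℕ → Rˣ) (w : R) (i : ℕ) : R :=
  (τ ^ (N - i))⁻¹ • (ascProd (fun k => (T k : R)) i (N - i) * w *
    ascProd (fun k => (↑(T k)⁻¹ : R)) 0 i)

/-- The raising operator, which adds a box to a row of a composition. -/
def raising (N : ℕ) (w : R) (x : ℕ → R) : R := x N * w

/-- The sum of `T j * T (j + 1) * ⋯ * T (m - 1)` over `j ≤ m`, that is over the minimal
representatives of the cosets of `S_m` in `S_{m + 1}`. -/
def cosetSum (T : ℕ → Rˣ) (m : ℕ) : R :=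
  ∑ j ∈ range (m + 1), ascProd (fun k => (T k : R)) j (m - j)

/-- The Hecke symmetrizer of `S_{m + 1}`, factored along the chain of symmetric groups. -/
def symmetrizer (T : ℕ → Rˣ) : ℕ → R
  | 0 => 1
  | m + 1 => cosetSum T (m + 1) * symmetrizer T m

lemma commute_symmetrizer {a : R} {m : ℕ} (ha : ∀ k < m, Commute (T k : R) a) :
    Commute a (symmetrizer T m) := by
  induction m with
  | zero => exact .one_right a
  | succ m ih =>
    have hasc : ∀ j ∈ range (m + 1 + 1), Commute a (ascProd (fun k => (T k : R)) j (m + 1 - j)) :=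
      fun j _ => semiconjBy_ascProd fun k hk => (ha (j + k) (by lia)).symm
    exact (Commute.sum_right _ _ _ hasc).mul_right (ih fun k hk => ha k (hk.trans m.lt_succ_self))

variable (h : HeckeRelations N qv τ T w x)
include h

lemma T_sq {k : ℕ} (hk : k < N) : (T k * T k : R) = (τ - 1) • (T k : R) + τ • 1 := by
  have := congrArg ((T k : R) * ·) (h.smul_inv k hk)
  simp only [mul_smul_comm, Units.mul_inv, mul_add, mul_one] at this
  rw [this]
  module

lemma commute_ascProd {j k m : ℕ} (hj : k + 1 < j) (hN : j + m ≤ N) :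
    Commute (T k : R) (ascProd (fun k => (T k : R)) j m) :=
  semiconjBy_ascProd fun l hl => (h.comm k (j + l) (by lia) (by lia)).units_val

lemma T_mul_ascProd {j k m : ℕ} (hj : j ≤ k) (hm : k + 2 ≤ j + m) (hN : j + m ≤ N) :
    (T (k + 1) : R) * ascProd (fun k => (T k : R)) j m =
      ascProd (fun k => (T k : R)) j m * T k := by
  induction m generalizing j with
  | zero => lia
  | succ m ih =>
    rcases hj.eq_or_lt with rfl | hjk
    · obtain ⟨m, rfl⟩ : ∃ l, m = l + 1 := ⟨m - 1, by lia⟩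
      have hbraid := congrArg Units.val (h.braid j (by lia))
      push_cast at hbraid
      have hrest := h.commute_ascProd (k := j) (j := j + 1 + 1) (m := m) (by lia) (by lia)
      rw [ascProd_succ, ascProd_succ, mul_assoc, mul_assoc, ← hrest.eq, ← mul_assoc,
        ← mul_assoc, ← hbraid]
      simp only [mul_assoc]
    · have hcomm := (h.comm j (k + 1) (by lia) (by lia)).units_val
      rw [ascProd_succ, ← mul_assoc, ← hcomm.eq, mul_assoc, ih hjk (by lia) (by lia), mul_assoc]

lemma cherednik_succ (hτ : τ ≠ 0) {i : ℕ} (hi : i < N) :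
    cherednik N τ T w (i + 1) = τ • (↑(T i)⁻¹ * cherednik N τ T w i * ↑(T i)⁻¹) := by
  obtain ⟨m, rfl⟩ : ∃ m, N = i + m + 1 := ⟨N - i - 1, by lia⟩
  rw [cherednik, cherednik, show i + m + 1 - (i + 1) = m by lia,
    show i + m + 1 - i = m + 1 by lia, ascProd_succ _ i, ascProd_succ' _ 0, pow_succ, zero_add,
    mul_smul_comm, smul_mul_assoc, smul_smul, mul_inv, mul_left_comm, mul_inv_cancel₀ hτ, mul_one]
  simp only [mul_assoc, Units.inv_mul_cancel_left]

lemma commute_T_cherednik_zero {k : ℕ} (hk : k + 1 < N) :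
    Commute (T (k + 1) : R) (cherednik N τ T w 0) := by
  refine Commute.smul_right ?_ _
  rw [ascProd_zero, mul_one, tsub_zero]
  calc (T (k + 1) : R) * (ascProd (fun k => (T k : R)) 0 N * w)
      = ascProd (fun k => (T k : R)) 0 N * (T k * w) := by
        rw [← mul_assoc, h.T_mul_ascProd k.zero_le (by lia) (by lia), mul_assoc]
    _ = _ := by rw [← h.w_mul_T k hk, mul_assoc]

lemma commute_T_cherednik_of_lt (hτ : τ ≠ 0) {i j : ℕ} (hij : i < j) (hj : j < N) :
    Commute (T j : R) (cherednik N τ T w i) := by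
  induction i with
  | zero =>
    obtain ⟨k, rfl⟩ := Nat.exists_eq_add_of_lt hij
    simpa using h.commute_T_cherednik_zero (by lia)
  | succ i ih =>
    have hT : Commute (T j : R) (↑(T i)⁻¹ : R) :=
      (h.comm i j hij hj).symm.units_val.units_inv_right
    rw [h.cherednik_succ hτ (by lia)]
    exact ((hT.mul_right (ih (by lia))).mul_right hT).smul_right _

lemma commute_T_cherednik_add_two (hτ : τ ≠ 0) {j : ℕ} (hj : j + 1 < N) :
    Commute (T j : R) (cherednik N τ T w (j + 2)) := by
  have hY := h.commute_T_cherednik_of_lt hτ j.lt_succ_self hj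
  have hbraid := h.braid j hj
  have hl : SemiconjBy (T j * T (j + 1))⁻¹ (T (j + 1)) (T j) :=
    SemiconjBy.inv_symm_left (hbraid.trans (mul_assoc _ _ _))
  have hr : SemiconjBy (T (j + 1) * T j)⁻¹ (T j) (T (j + 1)) :=
    SemiconjBy.inv_symm_left (hbraid.symm.trans (mul_assoc _ _ _))
  rw [h.cherednik_succ hτ hj, h.cherednik_succ hτ (by lia), mul_smul_comm, smul_mul_assoc]
  refine Commute.smul_right (Commute.smul_right ?_ _) _
  have := (hl.units_val.mul_left (SemiconjBy.mul_left hY.symm hr.units_val))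
  simp only [mul_inv_rev, Units.val_mul, mul_assoc] at this ⊢
  exact Commute.symm this

lemma commute_T_cherednik_of_gt (hτ : τ ≠ 0) {i j : ℕ} (hij : j + 1 < i) (hi : i ≤ N) :
    Commute (T j : R) (cherednik N τ T w i) := by
  induction i, hij using Nat.le_induction with
  | base => exact h.commute_T_cherednik_add_two hτ hi
  | succ i hij ih =>
    have hT : Commute (T j : R) (↑(T i)⁻¹ : R) :=
      (h.comm j i hij hi).units_val.units_inv_right
    rw [h.cherednik_succ hτ hi]
    exact ((hT.mul_right (ih (by lia))).mul_right hT).smul_right _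

lemma T_mul_cherednik_succ (hτ : τ ≠ 0) {i : ℕ} (hi : i < N) :
    T i * cherednik N τ T w (i + 1) = cherednik N τ T w i * (T i + (1 - τ) • 1) := by
  rw [h.cherednik_succ hτ hi, ← h.smul_inv i hi]
  simp only [mul_smul_comm, mul_assoc, Units.mul_inv_cancel_left]

lemma cherednik_succ_mul_T (hτ : τ ≠ 0) {i : ℕ} (hi : i < N) :
    cherednik N τ T w (i + 1) * T i = (T i + (1 - τ) • 1) * cherednik N τ T w i := by
  rw [h.cherednik_succ hτ hi, ← h.smul_inv i hi]
  simp only [smul_mul_assoc, mul_assoc, Units.inv_mul, mul_one]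

lemma commute_T_sum_cherednik (hτ : τ ≠ 0) {j : ℕ} (hj : j < N) :
    Commute (T j : R) (∑ i ∈ range (N + 1), cherednik N τ T w i) := by
  have hpair : Commute (T j : R) (cherednik N τ T w j + cherednik N τ T w (j + 1)) := by
    rw [commute_iff_eq, mul_add, add_mul, h.T_mul_cherednik_succ hτ hj,
      h.cherednik_succ_mul_T hτ hj, mul_add, add_mul]
    simp only [smul_mul_assoc, mul_smul_comm, one_mul, mul_one]
    abel
  rw [← add_sum_erase _ _ (mem_range.2 (show j < N + 1 by lia)), ← add_sum_erase _ _
    (mem_erase.2 ⟨j.succ_ne_self, mem_range.2 (show j + 1 < N + 1 by lia)⟩), ← add_assoc]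
  refine hpair.add_right (Commute.sum_right _ _ _ fun i hi => ?_)
  simp only [mem_erase, mem_range] at hi
  rcases lt_or_ge i j with hij | hij
  · exact h.commute_T_cherednik_of_lt hτ hij hj
  · exact h.commute_T_cherednik_of_gt hτ (by lia) (by lia)

lemma raising_mul_T {k : ℕ} (hk : k + 1 < N) :
    raising N w x * T (k + 1) = T k * raising N w x := by
  rw [raising, mul_assoc, h.w_mul_T k hk, ← mul_assoc, (h.x_comm_T k hk).eq, mul_assoc]

lemma cherednik_zero_mul_raising (hτ : τ ≠ 0) (hN : 0 < N) :
    cherednik N τ T w 0 * raising N w x = raising N w x * cherednik N τ T w 1 := by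
  obtain ⟨m, rfl⟩ : ∃ m, N = m + 1 := ⟨N - 1, by lia⟩
  have hw : w * w * (↑(T 0)⁻¹ : R) = ↑(T m)⁻¹ * (w * w) := by
    rw [Units.eq_inv_mul_iff_mul_eq, ← mul_assoc, ← h.w_sq_mul_T m rfl, Units.mul_inv_cancel_right]
  have hx : x (m + 1) * ascProd (fun k => (T k : R)) 0 m =
      ascProd (fun k => (T k : R)) 0 m * x (m + 1) :=
    semiconjBy_ascProd fun k hk => h.x_comm_T (0 + k) (by lia)
  have hwT : w * ascProd (fun k => (T k : R)) 1 m = ascProd (fun k => (T k : R)) 0 m * w :=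
    semiconjBy_ascProd fun k hk => by
      rw [add_comm, zero_add]
      exact h.w_mul_T k (by lia)
  have hs : (τ ^ (m + 1))⁻¹ * τ = (τ ^ m)⁻¹ := by
    rw [pow_succ, mul_inv, inv_mul_cancel_right₀ hτ]
  calc cherednik (m + 1) τ T w 0 * raising (m + 1) w x
      = (τ ^ (m + 1))⁻¹ • (ascProd (fun k => (T k : R)) 0 m * T m * (w * x (m + 1)) * w) := by
        simp only [cherednik, raising, ascProd_zero, tsub_zero, mul_one, ascProd_succ', zero_add,
          smul_mul_assoc, mul_assoc]
    _ = (τ ^ (m + 1))⁻¹ • (ascProd (fun k => (T k : R)) 0 m * (T m * x m) * (w * w)) := by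
        rw [h.w_mul_x m m.lt_succ_self]
        simp only [mul_assoc]
    _ = (τ ^ m)⁻¹ • (ascProd (fun k => (T k : R)) 0 m * x (m + 1) * (w * w * ↑(T 0)⁻¹)) := by
        rw [h.T_mul_x m m.lt_succ_self, mul_smul_comm, smul_mul_assoc, smul_smul, hs, hw]
        simp only [mul_assoc]
    _ = (τ ^ m)⁻¹ • (x (m + 1) * (w * ascProd (fun k => (T k : R)) 1 m) * (w * ↑(T 0)⁻¹)) := by
        rw [← hx, hwT]
        simp only [mul_assoc]
    _ = raising (m + 1) w x * cherednik (m + 1) τ T w 1 := by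
        simp only [cherednik, raising, add_tsub_cancel_right, ascProd_succ _ 0, ascProd_zero,
          mul_one, mul_smul_comm, mul_assoc]

lemma cherednik_mul_raising (hτ : τ ≠ 0) {i : ℕ} (hi : i < N) :
    cherednik N τ T w i * raising N w x = raising N w x * cherednik N τ T w (i + 1) := by
  induction i with
  | zero => exact h.cherednik_zero_mul_raising hτ hi
  | succ i ih =>
    have hinv : SemiconjBy (raising N w x) (↑(T (i + 1))⁻¹) (↑(T i)⁻¹) :=
      SemiconjBy.units_inv_right (h.raising_mul_T hi)
    have hY : SemiconjBy (raising N w x) (cherednik N τ T w (i + 1)) (cherednik N τ T w i) :=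
      (ih (by lia)).symm
    rw [h.cherednik_succ hτ (by lia), h.cherednik_succ hτ hi, smul_mul_assoc, mul_smul_comm]
    exact congrArg (τ • ·) ((hinv.mul_right hY).mul_right hinv).eq.symm

lemma ascProd_inv_mul_x (hτ : τ ≠ 0) {i : ℕ} (hi : i ≤ N) :
    ascProd (fun k => (↑(T k)⁻¹ : R)) 0 i * x i =
      (τ ^ i)⁻¹ • (x 0 * ascProd (fun k => (T k : R)) 0 i) := by
  induction i with
  | zero => simp [ascProd_zero]
  | succ i ih =>
    have hx : (↑(T i)⁻¹ : R) * x (i + 1) = τ⁻¹ • (x i * T i) := by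
      rw [Units.inv_mul_eq_iff_eq_mul, mul_smul_comm, ← mul_assoc, h.T_mul_x i hi, smul_mul_assoc,
        inv_smul_smul₀ hτ, Units.inv_mul_cancel_right]
    rw [ascProd_succ', ascProd_succ', zero_add, mul_assoc, hx, mul_smul_comm, ← mul_assoc,
      ih (by lia), smul_mul_assoc, smul_smul, pow_succ, mul_inv_rev, mul_assoc]

lemma cherednik_last_mul_raising (hτ : τ ≠ 0) :
    cherednik N τ T w N * raising N w x = qv • (raising N w x * cherednik N τ T w 0) := by
  have hx := h.ascProd_inv_mul_x hτ le_rfl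
  calc cherednik N τ T w N * raising N w x
      = w * (ascProd (fun k => (↑(T k)⁻¹ : R)) 0 N * x N) * w := by
        simp only [cherednik, raising, tsub_self, pow_zero, inv_one, one_smul, ascProd_zero,
          one_mul, mul_assoc]
    _ = (τ ^ N)⁻¹ • (w * x 0 * ascProd (fun k => (T k : R)) 0 N * w) := by
        rw [hx, mul_smul_comm, smul_mul_assoc, ← mul_assoc]
    _ = qv • (raising N w x * cherednik N τ T w 0) := by
        rw [h.w_mul_x_zero, smul_mul_assoc, smul_mul_assoc, smul_comm]
        simp only [cherednik, raising, ascProd_zero, tsub_zero, mul_one, mul_smul_comm, mul_assoc]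

lemma T_mul_cosetSum_mul {m k : ℕ} (hm : m < N) (hk : k ≤ m) {v : R}
    (hv : ∀ k < m, T k * v = τ • v) :
    T k * (cosetSum T (m + 1) * v) = τ • (cosetSum T (m + 1) * v) := by
  have hpair : (T k : R) * (ascProd (fun k => (T k : R)) k (m + 1 - k) +
      ascProd (fun k => (T k : R)) (k + 1) (m + 1 - (k + 1))) =
      τ • (ascProd (fun k => (T k : R)) k (m + 1 - k) +
        ascProd (fun k => (T k : R)) (k + 1) (m + 1 - (k + 1))) := by
    rw [show m + 1 - k = m - k + 1 by lia, Nat.add_sub_add_right, ascProd_succ, mul_add,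
      ← mul_assoc, h.T_sq (by lia), add_mul, smul_mul_assoc, smul_one_mul]
    module
  have hrest : ∀ j ∈ ((range (m + 2)).erase k).erase (k + 1),
      (T k : R) * (ascProd (fun k => (T k : R)) j (m + 1 - j) * v) =
        τ • (ascProd (fun k => (T k : R)) j (m + 1 - j) * v) := by
    intro j hj
    simp only [mem_erase, mem_range] at hj
    rcases lt_or_ge j k with hjk | hjk
    · obtain ⟨k, rfl⟩ : ∃ l, k = l + 1 := ⟨k - 1, by lia⟩
      rw [← mul_assoc, h.T_mul_ascProd (by lia) (by lia) (by lia), mul_assoc, hv k (by lia),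
        mul_smul_comm]
    · rw [← mul_assoc, (h.commute_ascProd (by lia) (by lia)).eq, mul_assoc, hv k (by lia),
        mul_smul_comm]
  rw [cosetSum, ← add_sum_erase _ _ (mem_range.2 (show k < m + 1 + 1 by lia)),
    ← add_sum_erase _ _ (mem_erase.2 ⟨k.succ_ne_self, mem_range.2
      (show k + 1 < m + 1 + 1 by lia)⟩), ← add_assoc, add_mul, mul_add, ← mul_assoc, hpair,
    smul_mul_assoc, sum_mul, mul_sum, smul_add, smul_sum, sum_congr rfl hrest]

lemma T_mul_symmetrizer {m k : ℕ} (hm : m ≤ N) (hk : k < m) :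
    T k * symmetrizer T m = τ • symmetrizer T m := by
  induction m generalizing k with
  | zero => lia
  | succ m ih => exact h.T_mul_cosetSum_mul hm (by lia) fun k hk => ih (by lia) hk

end HeckeRelations

end HeckeAlgebra

section PolynomialRepresentation

open HeckeRelations

variable {N : ℕ} {qv tv : K} {T : ℕ → P (N + 1) →ₗ[K] P (N + 1)}

/-- The operator `ω`: `x_0 ↦ qv * x_N` and `x_{i + 1} ↦ x_i`. -/
noncomputable def rotation (N : ℕ) (qv : K) : P (N + 1) →ₐ[K] P (N + 1) :=
  aeval fun j => C (if j = 0 then qv else 1) * X ((finRotate (N + 1)).symm j)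

lemma rotation_X (j : Fin (N + 1)) :
    rotation N qv (X j) = C (if j = 0 then qv else 1) * X ((finRotate (N + 1)).symm j) :=
  aeval_X _ j

lemma finRotate_symm_succ (j : Fin N) : (finRotate (N + 1)).symm j.succ = j.castSucc := by
  rw [Equiv.symm_apply_eq, finRotate_apply, Fin.coeSucc_eq_succ]

lemma finRotate_symm_zero : (finRotate (N + 1)).symm 0 = Fin.last N := by
  rw [Equiv.symm_apply_eq, finRotate_last]

lemma rotation_X_zero : rotation N qv (X 0) = C qv * X (Fin.last N) := by
  rw [rotation_X, if_pos rfl, finRotate_symm_zero]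

lemma rotation_X_succ (j : Fin N) : rotation N qv (X j.succ) = X j.castSucc := by
  rw [rotation_X, if_neg j.succ_ne_zero, finRotate_symm_succ, C_1, one_mul]

lemma foldl_sOp_tauOp (m : Fin (N + 1)) :
    (List.range m).foldl (fun acc k => sOp (N + 1) k ∘ₗ acc) (tauOp (N + 1) qv) =
      (aeval fun j => C (if j = 0 then qv else 1) * X (m.cycleRange.symm j) :
        P (N + 1) →ₐ[K] P (N + 1)).toLinearMap := by
  induction m using Fin.induction with
  | zero =>
    rw [Fin.val_zero, List.range_zero, List.foldl_nil, tauOp, Fin.cycleRange_zero]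
    congr 2
    funext j
    rcases eq_or_ne j 0 with rfl | hj
    · simp [← Equiv.Perm.inv_def]
    · simp [hj, ← Equiv.Perm.inv_def]
  | succ m ih =>
    rw [Fin.val_succ, List.range_succ, List.foldl_append, ← Fin.val_castSucc, ih]
    refine LinearMap.ext fun f => ?_
    simp only [List.foldl_cons, List.foldl_nil, LinearMap.comp_apply, AlgHom.toLinearMap_apply,
      Fin.val_castSucc, sOp_eq_rename]
    refine DFunLike.congr_fun (f := (rename (adj m)).comp (aeval _)) (algHom_ext fun j => ?_) f
    rw [AlgHom.comp_apply, aeval_X, aeval_X, map_mul, rename_C, rename_X]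
    congr 2
    cases j using Fin.cases with
    | zero => simp
    | succ j =>
      rw [Fin.cycleRange_symm_succ, Fin.cycleRange_symm_succ]
      rcases lt_trichotomy j m with hj | hj | hj
      · rw [Fin.succAbove_of_castSucc_lt _ _ (Fin.castSucc_lt_castSucc_iff.mpr hj),
          Fin.succAbove_of_castSucc_lt _ _ (Fin.castSucc_lt_succ_iff.mpr hj.le), adj_apply_of_ne]
        · simp; lia
        · simp; lia
      · rw [hj, Fin.succAbove_castSucc_self, Fin.succAbove_succ_self, Equiv.swap_apply_right]
      · rw [Fin.succAbove_of_le_castSucc _ _ (Fin.castSucc_le_castSucc_iff.mpr hj.le),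
          Fin.succAbove_of_le_castSucc _ _ (Fin.succ_le_castSucc_iff.mpr hj), adj_apply_of_ne]
        · simp; lia
        · simp; lia

lemma omegaOp_eq_rotation : omegaOp (N + 1) qv = (rotation N qv).toLinearMap := by
  have h := foldl_sOp_tauOp (qv := qv) (Fin.last N)
  rwa [Fin.cycleRange_last] at h

lemma rotation_T (hT : IsDL (N + 1) tv T) {k : ℕ} (hk : k + 1 < N) (f : P (N + 1)) :
    rotation N qv (T (k + 1) f) = T k (rotation N qv f) := by
  refine T_map hT (k := ⟨k + 1, hk⟩) (l := ⟨k, by lia⟩) rotation_X ?_ ?_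
    (finRotate_symm_succ ⟨k, by lia⟩) (finRotate_symm_succ ⟨k + 1, hk⟩) f
  · simp [Fin.ext_iff]
  · simp [Fin.ext_iff]

lemma rotation_rotation_T (hT : IsDL (N + 1) tv T) (hq : qv ≠ 0) {k : ℕ} (hk : k + 1 = N)
    (f : P (N + 1)) :
    rotation N qv (rotation N qv (T 0 f)) = T k (rotation N qv (rotation N qv f)) := by
  subst hk
  have hρ₀ : (finRotate (k + 2)).symm 0 = (Fin.last k).succ := finRotate_symm_zero
  have hρ₁ : (finRotate (k + 2)).symm (0 : Fin (k + 1)).succ = 0 := finRotate_symm_succ 0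
  have hρ₂ : (finRotate (k + 2)).symm (Fin.last k).succ = (Fin.last k).castSucc :=
    finRotate_symm_succ (Fin.last k)
  refine T_map hT (k := 0) (l := Fin.last k) (φ := (rotation (k + 1) qv).comp (rotation (k + 1) qv))
    (ρ := (finRotate (k + 2)).symm * (finRotate (k + 2)).symm)
    (c := fun j => (if j = 0 then qv else 1) * if (finRotate (k + 2)).symm j = 0 then qv else 1)
    (fun j => ?_) ?_ ?_ ?_ ?_ f
  · rw [AlgHom.comp_apply, rotation_X, map_mul, algHom_C, algebraMap_eq, rotation_X, ← mul_assoc,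
      ← C_mul]
    rfl
  · rw [Fin.castSucc_zero, hρ₀]
    simp [hq]
  · rw [Fin.castSucc_zero, hρ₀, hρ₁]
    simp
  · rw [Equiv.Perm.mul_apply, Fin.castSucc_zero, hρ₀, hρ₂]
  · rw [Equiv.Perm.mul_apply, hρ₁, hρ₀]

lemma C_mul_Tinv (h₀ : tv ≠ 0) (k : ℕ) (f : P (N + 1)) :
    C tv * Tinv (N + 1) tv T k f = T k f + (1 - C tv) * f := by
  have h : (C tv : P (N + 1)) * C tv⁻¹ = 1 := by rw [← C_mul, mul_inv_cancel₀ h₀, C_1]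
  simp only [Tinv, LinearMap.add_apply, LinearMap.sub_apply, LinearMap.smul_apply,
    LinearMap.id_apply, smul_eq_C_mul]
  linear_combination (T k f + f) * h

/-- The Demazure–Lustig operators as units; the indices beyond their range give `1`. -/
noncomputable def unitT (hT : IsDL (N + 1) tv T) (h₀ : tv ≠ 0) (k : ℕ) :
    (Module.End K (P (N + 1)))ˣ :=
  if hk : k < N then
    { val := T k
      inv := Tinv (N + 1) tv T k
      val_inv := by
        refine LinearMap.ext fun f => mul_left_cancel₀ (C_ne_zero.mpr h₀) ?_
        rw [Module.End.mul_apply, ← smul_eq_C_mul, ← map_smul, smul_eq_C_mul, C_mul_Tinv h₀,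
          map_add, T_T hT ⟨k, hk⟩, sub_mul, one_mul, ← smul_eq_C_mul, map_sub, map_smul,
          smul_eq_C_mul, smul_eq_C_mul, smul_eq_C_mul, C_sub, C_1, Module.End.one_apply]
        ring
      inv_val := by
        refine LinearMap.ext fun f => mul_left_cancel₀ (C_ne_zero.mpr h₀) ?_
        rw [Module.End.mul_apply, C_mul_Tinv h₀, T_T hT ⟨k, hk⟩, smul_eq_C_mul, smul_eq_C_mul,
          C_sub, C_1, Module.End.one_apply]
        ring }
  else 1

lemma coe_unitT (hT : IsDL (N + 1) tv T) (h₀ : tv ≠ 0) {k : ℕ} (hk : k < N) :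
    (unitT hT h₀ k : Module.End K (P (N + 1))) = T k := by
  rw [unitT, dif_pos hk]

lemma coe_unitT_inv (hT : IsDL (N + 1) tv T) (h₀ : tv ≠ 0) {k : ℕ} (hk : k < N) :
    (↑(unitT hT h₀ k)⁻¹ : Module.End K (P (N + 1))) = Tinv (N + 1) tv T k := by
  rw [unitT, dif_pos hk, Units.inv_mk]

/-- Multiplication by the variable `x_i`, for `i ≤ N`. -/
noncomputable def mulX (N i : ℕ) : Module.End K (P (N + 1)) :=
  LinearMap.mulLeft K (X (Fin.ofNat (N + 1) i))

lemma mulX_apply {i : ℕ} (hi : i < N + 1) (f : P (N + 1)) : mulX N i f = X ⟨i, hi⟩ * f := by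
  rw [mulX, LinearMap.mulLeft_apply, Fin.ofNat_eq_cast, Fin.natCast_eq_mk hi]

lemma heckeRelations_unitT (hT : IsDL (N + 1) tv T) (h₀ : tv ≠ 0) (hq : qv ≠ 0) :
    HeckeRelations N qv tv (unitT hT h₀) (rotation N qv).toLinearMap (mulX N) where
  braid k hk := by
    ext1
    push_cast
    rw [coe_unitT hT h₀ hk, coe_unitT hT h₀ (by lia)]
    exact LinearMap.ext fun f => T_braid hT (k := ⟨k, by lia⟩) (l := ⟨k + 1, hk⟩) rfl f
  comm k l hkl hl := by
    ext1
    push_cast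
    rw [coe_unitT hT h₀ hl, coe_unitT hT h₀ (by lia)]
    exact LinearMap.ext fun f => T_comm hT (k := ⟨k, by lia⟩) (l := ⟨l, hl⟩) hkl f
  smul_inv k hk := by
    rw [coe_unitT hT h₀ hk, coe_unitT_inv hT h₀ hk]
    refine LinearMap.ext fun f => ?_
    rw [LinearMap.smul_apply, smul_eq_C_mul, C_mul_Tinv h₀, LinearMap.add_apply,
      LinearMap.smul_apply, Module.End.one_apply, smul_eq_C_mul, C_sub, C_1]
  w_mul_T k hk := by
    rw [coe_unitT hT h₀ hk, coe_unitT hT h₀ (by lia)]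
    exact LinearMap.ext fun f => rotation_T hT hk f
  w_sq_mul_T k hk := by
    rw [coe_unitT hT h₀ (by lia : 0 < N), coe_unitT hT h₀ (by lia)]
    exact LinearMap.ext fun f => rotation_rotation_T hT hq hk f
  x_comm_T k hk := by
    rw [coe_unitT hT h₀ (by lia)]
    refine LinearMap.ext fun f => ?_
    rw [Module.End.mul_apply, Module.End.mul_apply, mulX_apply N.lt_succ_self,
      mulX_apply N.lt_succ_self]
    refine (T_mul_of_rename_eq hT (k := ⟨k, by lia⟩) ?_ f).symm
    rw [rename_X, adj_apply_of_ne (by simp; lia) (by simp; lia)]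
  T_mul_x k hk := by
    rw [coe_unitT hT h₀ hk, coe_unitT_inv hT h₀ hk]
    refine LinearMap.ext fun f => ?_
    rw [Module.End.mul_apply, mulX_apply (by lia), LinearMap.smul_apply, Module.End.mul_apply,
      mulX_apply (by lia), smul_eq_C_mul, mul_left_comm, C_mul_Tinv h₀, sub_mul, one_mul,
      ← add_sub_assoc]
    exact T_X_castSucc_mul hT ⟨k, hk⟩ f
  w_mul_x k hk := LinearMap.ext fun f => by
    rw [Module.End.mul_apply, Module.End.mul_apply, mulX_apply (by lia), mulX_apply (by lia),
      AlgHom.toLinearMap_apply, map_mul, AlgHom.toLinearMap_apply]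
    exact congrArg (· * _) (rotation_X_succ ⟨k, hk⟩)
  w_mul_x_zero := LinearMap.ext fun f => by
    rw [Module.End.mul_apply, LinearMap.smul_apply, Module.End.mul_apply,
      mulX_apply N.succ_pos, mulX_apply N.lt_succ_self, AlgHom.toLinearMap_apply, map_mul,
      AlgHom.toLinearMap_apply, smul_eq_C_mul, ← mul_assoc]
    exact congrArg (· * _) rotation_X_zero

lemma foldr_comp_eq_ascProd {M : Type*} [AddCommMonoid M] [Module K M] {S : ℕ → M →ₗ[K] M}
    {U : ℕ → Module.End K M} {i m : ℕ} (h : ∀ k < m, S (i + k) = U (i + k)) :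
    (List.range' i m).foldr (fun k acc => S k ∘ₗ acc) LinearMap.id = ascProd U i m := by
  induction m generalizing i with
  | zero => rfl
  | succ m ih =>
    rw [List.range'_succ, List.foldr_cons, ascProd_succ,
      ih fun k hk => by simpa only [add_assoc, add_comm 1] using h (k + 1) (by lia)]
    exact congrArg (· ∘ₗ _) (h 0 m.succ_pos)

lemma Yop_eq_cherednik (hT : IsDL (N + 1) tv T) (h₀ : tv ≠ 0) (i : Fin (N + 1)) :
    Yop (N + 1) qv tv T i =
      cherednik N tv (unitT hT h₀) (rotation N qv).toLinearMap i := by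
  have hval : ∀ k < N - i, T (i + k) = unitT hT h₀ (i + k) := fun k hk =>
    (coe_unitT hT h₀ (by lia)).symm
  have hinv : ∀ k < (i : ℕ), Tinv (N + 1) tv T (0 + k) = ↑(unitT hT h₀ (0 + k))⁻¹ := fun k hk =>
    (coe_unitT_inv hT h₀ (by lia)).symm
  rw [Yop, cherednik, omegaOp_eq_rotation, List.range_eq_range', Nat.add_sub_cancel,
    foldr_comp_eq_ascProd (U := fun k => ↑(unitT hT h₀ k)) hval,
    foldr_comp_eq_ascProd (U := fun k => ↑(unitT hT h₀ k)⁻¹) hinv]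
  rfl

end PolynomialRepresentation

section LeadingTerms

variable {n N : ℕ} {qv tv : K} {T : ℕ → P (N + 1) →ₗ[K] P (N + 1)}

/-- The coefficient of a polynomial at an exponent vector given as a tuple. -/
noncomputable def coeffAt (ν : Fin n → ℕ) : P n →ₗ[K] K :=
  lcoeff K (Finsupp.equivFunOnFinite.symm ν)

lemma coeffAt_add_single_X_mul (ν : Fin n → ℕ) (i : Fin n) (f : P n) :
    coeffAt (ν + Pi.single i 1) (X i * f) = coeffAt ν f := by
  have h : Finsupp.equivFunOnFinite.symm (ν + Pi.single i 1) =
      Finsupp.single i 1 + Finsupp.equivFunOnFinite.symm ν := by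
    ext j
    simp [Finsupp.single_eq_pi_single, add_comm]
  rw [coeffAt, coeffAt, lcoeff_apply, lcoeff_apply, h, coeff_X_mul]

lemma coeffAt_X_mul_of_eq_zero {ν : Fin n → ℕ} {i : Fin n} (h : ν i = 0) (f : P n) :
    coeffAt ν (X i * f) = 0 := by
  rw [coeffAt, lcoeff_apply, coeff_X_mul', if_neg (by simp [h])]

lemma coeffAt_C_mul (ν : Fin n → ℕ) (c : K) (f : P n) : coeffAt ν (C c * f) = c * coeffAt ν f :=
  coeff_C_mul _ _ _

lemma coeffAt_C (ν : Fin n → ℕ) (a : K) : coeffAt ν (C a : P n) = if 0 = ν then a else 0 := by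
  rw [coeffAt, lcoeff_apply, coeff_C]
  congr 1
  rw [Equiv.eq_symm_apply]
  rfl

lemma coeffAt_rename (σ : Equiv.Perm (Fin n)) (ν : Fin n → ℕ) (f : P n) :
    coeffAt ν (rename σ f) = coeffAt (ν ∘ σ) f := by
  have h : Finsupp.equivFunOnFinite.symm ν =
      Finsupp.mapDomain σ (Finsupp.equivFunOnFinite.symm (ν ∘ σ)) := by
    ext j
    rw [← σ.apply_symm_apply j, Finsupp.mapDomain_apply σ.injective]
    simp
  rw [coeffAt, coeffAt, lcoeff_apply, lcoeff_apply, h, coeff_rename_mapDomain _ σ.injective]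

lemma exists_eq_add_single {ν : Fin n → ℕ} {i : Fin n} (h : ν i ≠ 0) :
    ∃ μ : Fin n → ℕ, ν = μ + Pi.single i 1 :=
  ⟨Function.update ν i (ν i - 1), by
    ext j
    rcases eq_or_ne j i with rfl | hj
    · simp [Nat.sub_add_cancel (Nat.one_le_iff_ne_zero.2 h)]
    · simp [hj]⟩

lemma ne_zero_of_add_single_eq_add_single {μ ν : Fin n → ℕ} {i j : Fin n} (hij : i ≠ j)
    (h : μ + Pi.single i 1 = ν + Pi.single j 1) : μ j ≠ 0 := by
  have := congrFun h j
  rw [Pi.add_apply, Pi.add_apply, Pi.single_eq_same, Pi.single_eq_of_ne hij.symm] at this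
  lia

lemma add_single_comp_perm (μ : Fin n → ℕ) (σ : Equiv.Perm (Fin n)) (i : Fin n) :
    (μ + Pi.single (σ i) 1) ∘ σ = μ ∘ σ + Pi.single i 1 := by
  ext j
  simp [Pi.single_apply]

lemma coeffAt_rotation (ν : Fin (N + 1) → ℕ) (f : P (N + 1)) :
    coeffAt ν (rotation N qv f) =
      qv ^ ν (Fin.last N) * coeffAt (ν ∘ (finRotate (N + 1)).symm) f := by
  induction f using MvPolynomial.induction_on generalizing ν with
  | C a =>
    rw [algHom_C, algebraMap_eq, coeffAt_C, coeffAt_C]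
    rcases eq_or_ne 0 ν with rfl | hν
    · simp
    · have hν' : 0 ≠ ν ∘ (finRotate (N + 1)).symm := fun h =>
        hν ((finRotate (N + 1)).symm.surjective.injective_comp_right h)
      rw [if_neg hν, if_neg hν', mul_zero]
  | add f g hf hg => rw [map_add, map_add, map_add, hf, hg, mul_add]
  | mul_X f i hf =>
    rw [map_mul, rotation_X, mul_comm, mul_assoc, coeffAt_C_mul, mul_comm f]
    by_cases h : ν ((finRotate (N + 1)).symm i) = 0
    · rw [coeffAt_X_mul_of_eq_zero h, coeffAt_X_mul_of_eq_zero (i := i) h, mul_zero, mul_zero]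
    · obtain ⟨μ, rfl⟩ := exists_eq_add_single h
      rw [coeffAt_add_single_X_mul, add_single_comp_perm, coeffAt_add_single_X_mul, hf,
        ← mul_assoc, Pi.add_apply, pow_add, mul_comm (qv ^ μ _)]
      have hi : Fin.last N = (finRotate (N + 1)).symm i ↔ i = 0 := by
        rw [Equiv.eq_symm_apply, finRotate_last, eq_comm]
      simp only [Pi.single_apply, hi]
      split_ifs <;> simp

/-- The sum of squares of an exponent vector; it orders the compositions of a given size in the
same way the leading terms of the operators `T k` do. -/
def sqSum (ν : Fin n → ℕ) : ℕ := ∑ i, ν i ^ 2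

lemma sqSum_comp_perm (ν : Fin n → ℕ) (σ : Equiv.Perm (Fin n)) : sqSum (ν ∘ σ) = sqSum ν :=
  Equiv.sum_comp σ fun i => ν i ^ 2

lemma sqSum_add_single (ν : Fin n → ℕ) (i : Fin n) :
    sqSum (ν + Pi.single i 1) = sqSum ν + 2 * ν i + 1 := by
  simp [sqSum, Pi.single_apply, add_sq, sum_add_distrib, add_assoc]

/-- The polynomials whose exponent vectors have sum of squares at most `B`. -/
noncomputable def sqFiltration (n B : ℕ) : Submodule K (P n) :=
  ⨅ (ν : Fin n → ℕ) (_ : B < sqSum ν), LinearMap.ker (coeffAt ν)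

lemma mem_sqFiltration {B : ℕ} {f : P n} :
    f ∈ sqFiltration n B ↔ ∀ ν, B < sqSum ν → coeffAt ν f = 0 := by
  simp [sqFiltration]

lemma sqFiltration_mono {B C : ℕ} (h : B ≤ C) : sqFiltration n B ≤ sqFiltration n C :=
  fun _ hf => mem_sqFiltration.2 fun ν hν => mem_sqFiltration.1 hf ν (h.trans_lt hν)

lemma X_mul_T_sub_X_mul_T (hT : IsDL (N + 1) tv T) (k : Fin N) (f : P (N + 1)) :
    X k.castSucc * T k f - X k.succ * T k f = C (1 - tv) * (X k.succ * f) +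
      (C tv * (X k.castSucc * rename (adj k) f) - X k.succ * rename (adj k) f) := by
  rw [C_sub, C_1]
  linear_combination X_sub_X_mul_T hT k f

lemma coeffAt_T_sub (hT : IsDL (N + 1) tv T) (k : Fin N) (ν : Fin (N + 1) → ℕ)
    (f : P (N + 1)) :
    coeffAt (ν + Pi.single k.succ 1) (T k f) - coeffAt (ν + Pi.single k.castSucc 1) (T k f) =
      (1 - tv) * coeffAt (ν + Pi.single k.castSucc 1) f +
      tv * coeffAt ((ν + Pi.single k.succ 1) ∘ adj k) f -
        coeffAt ((ν + Pi.single k.castSucc 1) ∘ adj k) f := by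
  have h := congrArg (coeffAt (ν + Pi.single k.castSucc 1 + Pi.single k.succ 1))
    (X_mul_T_sub_X_mul_T hT k f)
  simp only [LinearMap.map_add, LinearMap.map_sub, coeffAt_C_mul, coeffAt_add_single_X_mul] at h
  rw [add_right_comm] at h
  simpa only [coeffAt_add_single_X_mul, coeffAt_rename, add_sub_assoc] using h

lemma coeffAt_T_of_succ_eq_zero (hT : IsDL (N + 1) tv T) {k : Fin N} {ν : Fin (N + 1) → ℕ}
    (hν : ν k.succ = 0) (f : P (N + 1)) :
    coeffAt ν (T k f) = tv * coeffAt (ν ∘ adj k) f := by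
  have h := congrArg (coeffAt (ν + Pi.single k.castSucc 1)) (X_mul_T_sub_X_mul_T hT k f)
  have h₀ : (ν + Pi.single k.castSucc 1 : Fin (N + 1) → ℕ) k.succ = 0 := by
    simp [hν, k.castSucc_lt_succ.ne']
  simpa only [LinearMap.map_add, LinearMap.map_sub, coeffAt_C_mul, coeffAt_add_single_X_mul,
    coeffAt_X_mul_of_eq_zero h₀, coeffAt_rename, mul_zero, zero_add, sub_zero] using h

lemma coeffAt_T_of_castSucc_eq_zero (hT : IsDL (N + 1) tv T) {k : Fin N} {ν : Fin (N + 1) → ℕ}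
    (hν : ν k.castSucc = 0) (f : P (N + 1)) :
    coeffAt ν (T k f) = coeffAt (ν ∘ adj k) f + (tv - 1) * coeffAt ν f := by
  have h := congrArg (coeffAt (ν + Pi.single k.succ 1)) (X_mul_T_sub_X_mul_T hT k f)
  have h₀ : (ν + Pi.single k.succ 1 : Fin (N + 1) → ℕ) k.castSucc = 0 := by
    simp [hν, k.castSucc_lt_succ.ne]
  simp only [LinearMap.map_add, LinearMap.map_sub, coeffAt_C_mul, coeffAt_add_single_X_mul,
    coeffAt_X_mul_of_eq_zero h₀, coeffAt_rename] at h
  linear_combination -h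

lemma coeffAt_T_of_le (hT : IsDL (N + 1) tv T) {k : Fin N} {ν : Fin (N + 1) → ℕ}
    {f : P (N + 1)} (hν : ν k.succ ≤ ν k.castSucc) (hf : f ∈ sqFiltration (N + 1) (sqSum ν)) :
    coeffAt ν (T k f) = tv * coeffAt (ν ∘ adj k) f := by
  induction hd : ν k.succ generalizing ν with
  | zero => exact coeffAt_T_of_succ_eq_zero hT hd f
  | succ d ih =>
    obtain ⟨μ, rfl⟩ := exists_eq_add_single (hd.trans_ne d.succ_ne_zero)
    simp only [Pi.add_apply, Pi.single_eq_same, Pi.single_eq_of_ne k.castSucc_lt_succ.ne] at hν hd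
    have hlt : sqSum (μ + Pi.single k.succ 1) < sqSum (μ + Pi.single k.castSucc 1) := by
      rw [sqSum_add_single, sqSum_add_single]
      lia
    have hf' := mem_sqFiltration.1 hf
    have hs := hf' ((μ + Pi.single k.castSucc 1) ∘ adj k) (by rwa [sqSum_comp_perm])
    have htop := ih (ν := μ + Pi.single k.castSucc 1)
      (by simp [k.castSucc_lt_succ.ne']; lia) (sqFiltration_mono hlt.le hf)
      (by simp [k.castSucc_lt_succ.ne']; lia)
    linear_combination coeffAt_T_sub hT k μ f + htop + (1 - tv) * hf' _ hlt + (tv - 1) * hs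

/-- Convexity along the lines in the direction `e_k - e_{k + 1}`. -/
def ConvexAlong (k : Fin N) (F : (Fin (N + 1) → ℕ) → ℕ) : Prop :=
  ∀ ν : Fin (N + 1) → ℕ, 2 * F (ν + Pi.single k.castSucc 1 + Pi.single k.succ 1) ≤
    F (ν + Pi.single k.castSucc 1 + Pi.single k.castSucc 1) +
      F (ν + Pi.single k.succ 1 + Pi.single k.succ 1)

lemma coeffAt_T_eq_zero_of_le_castSucc (hT : IsDL (N + 1) tv T) {k : Fin N}
    {F : (Fin (N + 1) → ℕ) → ℕ} (hF : ConvexAlong k F) {B : ℕ} {f : P (N + 1)}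
    (hf : ∀ ν, B < F ν → coeffAt ν f = 0 ∧ coeffAt (ν ∘ adj k) f = 0)
    {ν : Fin (N + 1) → ℕ} (hν : B < F ν) (hmono : ∀ μ : Fin (N + 1) → ℕ,
      ν = μ + Pi.single k.succ 1 → F ν ≤ F (μ + Pi.single k.castSucc 1)) :
    coeffAt ν (T k f) = 0 := by
  induction hd : ν k.succ generalizing ν with
  | zero => rw [coeffAt_T_of_succ_eq_zero hT hd, (hf ν hν).2, mul_zero]
  | succ d ih =>
    obtain ⟨μ, rfl⟩ := exists_eq_add_single (hd.trans_ne d.succ_ne_zero)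
    have hμ := hmono μ rfl
    have htop := ih (ν := μ + Pi.single k.castSucc 1) (hν.trans_le hμ) (fun μ' h => by
      obtain ⟨ρ, rfl⟩ : ∃ ρ, μ = ρ + Pi.single k.succ 1 := exists_eq_add_single
        (ne_zero_of_add_single_eq_add_single k.castSucc_lt_succ.ne h)
      rw [add_right_comm, add_left_inj] at h
      rw [← h, add_right_comm _ (Pi.single k.castSucc 1) (Pi.single k.castSucc 1)]
      rw [add_right_comm ρ (Pi.single k.succ 1) (Pi.single k.castSucc 1)] at hμ ⊢
      linarith [hF ρ]) (by simpa [k.castSucc_lt_succ.ne'] using hd)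
    have h₁ := hf _ hν
    have h₂ := hf _ (hν.trans_le hμ)
    linear_combination coeffAt_T_sub hT k μ f + htop + (1 - tv) * h₂.1 + tv * h₁.2 - h₂.2

lemma coeffAt_T_eq_zero_of_le_succ (hT : IsDL (N + 1) tv T) {k : Fin N}
    {F : (Fin (N + 1) → ℕ) → ℕ} (hF : ConvexAlong k F) {B : ℕ} {f : P (N + 1)}
    (hf : ∀ ν, B < F ν → coeffAt ν f = 0 ∧ coeffAt (ν ∘ adj k) f = 0)
    {ν : Fin (N + 1) → ℕ} (hν : B < F ν) (hmono : ∀ μ : Fin (N + 1) → ℕ,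
      ν = μ + Pi.single k.castSucc 1 → F ν ≤ F (μ + Pi.single k.succ 1)) :
    coeffAt ν (T k f) = 0 := by
  induction hd : ν k.castSucc generalizing ν with
  | zero =>
    rw [coeffAt_T_of_castSucc_eq_zero hT hd, (hf ν hν).1, (hf ν hν).2, mul_zero, add_zero]
  | succ d ih =>
    obtain ⟨μ, rfl⟩ := exists_eq_add_single (hd.trans_ne d.succ_ne_zero)
    have hμ := hmono μ rfl
    have htop := ih (ν := μ + Pi.single k.succ 1) (hν.trans_le hμ) (fun μ' h => by
      obtain ⟨ρ, rfl⟩ : ∃ ρ, μ = ρ + Pi.single k.castSucc 1 := exists_eq_add_single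
        (ne_zero_of_add_single_eq_add_single k.castSucc_lt_succ.ne' h)
      rw [add_right_comm, add_left_inj] at h
      rw [← h]
      rw [add_right_comm _ (Pi.single k.castSucc 1) (Pi.single k.castSucc 1)] at hμ
      linarith [hF ρ]) (by simpa [k.castSucc_lt_succ.ne] using hd)
    have h₁ := hf _ hν
    have h₂ := hf _ (hν.trans_le hμ)
    linear_combination -coeffAt_T_sub hT k μ f + htop - (1 - tv) * h₁.1 - tv * h₂.2 + h₁.2

lemma coeffAt_T_eq_zero (hT : IsDL (N + 1) tv T) {k : Fin N} {F : (Fin (N + 1) → ℕ) → ℕ}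
    (hF : ConvexAlong k F) {B : ℕ} {f : P (N + 1)}
    (hf : ∀ ν, B < F ν → coeffAt ν f = 0 ∧ coeffAt (ν ∘ adj k) f = 0)
    {ν : Fin (N + 1) → ℕ} (hν : B < F ν) : coeffAt ν (T k f) = 0 := by
  by_cases hcast : ∀ μ : Fin (N + 1) → ℕ,
      ν = μ + Pi.single k.succ 1 → F ν ≤ F (μ + Pi.single k.castSucc 1)
  · exact coeffAt_T_eq_zero_of_le_castSucc hT hF hf hν hcast
  refine coeffAt_T_eq_zero_of_le_succ hT hF hf hν fun μ hμ => ?_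
  push Not at hcast
  obtain ⟨μ', rfl, hlt⟩ := hcast
  obtain ⟨ρ, rfl⟩ : ∃ ρ, μ' = ρ + Pi.single k.castSucc 1 := exists_eq_add_single
    (ne_zero_of_add_single_eq_add_single k.castSucc_lt_succ.ne' hμ)
  rw [add_right_comm, add_left_inj] at hμ
  rw [← hμ]
  rw [add_right_comm _ (Pi.single k.castSucc 1) (Pi.single k.castSucc 1)] at hlt
  linarith [hF ρ]

lemma convexAlong_sqSum (k : Fin N) : ConvexAlong k sqSum := fun ν => by
  simp only [sqSum_add_single, Pi.add_apply, Pi.single_eq_same,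
    Pi.single_eq_of_ne k.castSucc_lt_succ.ne']
  lia

lemma T_mem_sqFiltration (hT : IsDL (N + 1) tv T) (k : Fin N) {B : ℕ} {f : P (N + 1)}
    (hf : f ∈ sqFiltration (N + 1) B) : T k f ∈ sqFiltration (N + 1) B := by
  rw [mem_sqFiltration] at hf ⊢
  exact fun ν hν => coeffAt_T_eq_zero hT (convexAlong_sqSum k)
    (fun μ hμ => ⟨hf _ hμ, hf _ (by rwa [sqSum_comp_perm])⟩) hν

lemma rotation_mem_sqFiltration {B : ℕ} {f : P (N + 1)} (hf : f ∈ sqFiltration (N + 1) B) :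
    rotation N qv f ∈ sqFiltration (N + 1) B := by
  refine mem_sqFiltration.2 fun ν hν => ?_
  rw [coeffAt_rotation, mem_sqFiltration.1 hf _ (by rwa [sqSum_comp_perm]), mul_zero]

lemma ascProd_T_mem_sqFiltration (hT : IsDL (N + 1) tv T) {i m B : ℕ} (hm : i + m ≤ N)
    {f : P (N + 1)} (hf : f ∈ sqFiltration (N + 1) B) :
    ascProd (M := Module.End K (P (N + 1))) T i m f ∈ sqFiltration (N + 1) B := by
  induction m generalizing f with
  | zero => exact hf
  | succ m ih =>
    rw [ascProd_succ', Module.End.mul_apply]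
    exact ih (by lia) (T_mem_sqFiltration hT ⟨i + m, hm⟩ hf)

lemma cycleIcc_mul_adj {i : Fin (N + 1)} {m : Fin N} (h : i ≤ m.castSucc) :
    Fin.cycleIcc i m.castSucc * adj m = Fin.cycleIcc i m.succ := by
  have him : i < m.succ := h.trans_lt m.castSucc_lt_succ
  ext1 j
  rw [Equiv.Perm.mul_apply]
  rcases eq_or_ne j m.castSucc with rfl | hj
  · rw [Equiv.swap_apply_left, Fin.cycleIcc_of_gt m.castSucc_lt_succ,
      Fin.cycleIcc_of_ge_of_lt h m.castSucc_lt_succ, Fin.coeSucc_eq_succ]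
  rcases eq_or_ne j m.succ with rfl | hj'
  · rw [Equiv.swap_apply_right, Fin.cycleIcc_of_last h, Fin.cycleIcc_of_last him.le]
  rw [Equiv.swap_apply_of_ne_of_ne hj hj']
  rcases lt_or_ge j i with hji | hji
  · rw [Fin.cycleIcc_of_lt hji, Fin.cycleIcc_of_lt hji]
  rcases hj.lt_or_gt with hjm | hjm
  · rw [Fin.cycleIcc_of_ge_of_lt hji hjm,
      Fin.cycleIcc_of_ge_of_lt hji (hjm.trans m.castSucc_lt_succ)]
  · rw [Fin.cycleIcc_of_gt hjm,
      Fin.cycleIcc_of_gt ((Fin.castSucc_lt_iff_succ_le.1 hjm).lt_of_ne' hj')]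

lemma coeffAt_ascProd_T (hT : IsDL (N + 1) tv T) {i m : Fin (N + 1)} (him : i ≤ m)
    {ν : Fin (N + 1) → ℕ} (hν : ∀ j, i < j → j ≤ m → ν j ≤ ν i) {f : P (N + 1)}
    (hf : f ∈ sqFiltration (N + 1) (sqSum ν)) :
    coeffAt ν (ascProd (M := Module.End K (P (N + 1))) T i (m - i) f) =
      tv ^ (m - i : ℕ) * coeffAt (ν ∘ Fin.cycleIcc i m) f := by
  induction m using Fin.induction generalizing f with
  | zero =>
    obtain rfl : i = 0 := Fin.le_zero_iff.1 him
    rw [Fin.cycleIcc_eq, tsub_self, ascProd_zero, pow_zero, one_mul]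
    rfl
  | succ m ih =>
    rcases him.eq_or_lt with rfl | hlt
    · rw [Fin.cycleIcc_eq, tsub_self, ascProd_zero, pow_zero, one_mul]
      rfl
    have him' : i ≤ m.castSucc := Fin.le_castSucc_iff.2 hlt
    have hsub : (m.succ - i : ℕ) = m.castSucc - i + 1 := by
      rw [Fin.le_def] at him'
      simp at him' ⊢
      lia
    have hlast : (i + (m.castSucc - i) : ℕ) = m := by
      rw [Fin.le_def] at him'
      simp at him' ⊢
      lia
    rw [hsub, ascProd_succ', Module.End.mul_apply, hlast,
      ih him' (fun j hj hjm => hν j hj (hjm.trans m.castSucc_lt_succ.le))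
        (T_mem_sqFiltration hT m hf),
      coeffAt_T_of_le hT _ (by rwa [sqSum_comp_perm]), pow_succ, mul_assoc,
      Function.comp_assoc, ← Equiv.Perm.coe_mul, cycleIcc_mul_adj him']
    rw [Function.comp_apply, Function.comp_apply, Fin.cycleIcc_of_last him',
      Fin.cycleIcc_of_gt m.castSucc_lt_succ]
    exact hν _ hlt le_rfl

end LeadingTerms

section StaircaseOrder

variable {n N : ℕ}

/-- The number of boxes of the composition `ν` outside the staircase whose rows have length `c`
before position `j` and `c + 1` from position `j` on; the subtraction is truncated. -/
def staircaseWeight (j c : ℕ) (ν : Fin n → ℕ) : ℕ :=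
  ∑ i : Fin n, (ν i - (c + if (i : ℕ) < j then 0 else 1))

/-- The order on compositions which bounds the exponents of a nonsymmetric Macdonald polynomial
by its leading one. Unlike the usual order it is given by numerical inequalities, each of them
convex along the lines on which the operators `T k` move exponents. -/
def StaircaseLE (ν η : Fin n → ℕ) : Prop :=
  ∀ j ≤ n, ∀ c, staircaseWeight j c ν ≤ staircaseWeight j c η

lemma staircaseWeight_add_single (j c : ℕ) (ν : Fin n → ℕ) (i : Fin n) :
    staircaseWeight j c (ν + Pi.single i 1) =
      staircaseWeight j c ν + if c + (if (i : ℕ) < j then 0 else 1) ≤ ν i then 1 else 0 := by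
  have h (k : Fin n) : (ν + Pi.single i 1 : Fin n → ℕ) k - (c + if (k : ℕ) < j then 0 else 1) =
      (ν k - (c + if (k : ℕ) < j then 0 else 1)) +
        if k = i then (if c + (if (i : ℕ) < j then 0 else 1) ≤ ν i then 1 else 0) else 0 := by
    rcases eq_or_ne k i with rfl | hk
    · simp only [Pi.add_apply, Pi.single_eq_same, if_true]
      split_ifs <;> lia
    · simp [hk]
  simp only [staircaseWeight, h, sum_add_distrib, sum_ite_eq', mem_univ, if_true]

lemma convexAlong_staircaseWeight (k : Fin N) (j c : ℕ) :
    ConvexAlong k (staircaseWeight j c) := fun ν => by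
  simp only [staircaseWeight_add_single, Pi.add_apply, Pi.single_eq_same,
    Pi.single_eq_of_ne k.castSucc_lt_succ.ne']
  split_ifs <;> lia

lemma staircaseWeight_succ (i : Fin n) (c : ℕ) (ν : Fin n → ℕ) :
    staircaseWeight (i + 1) c ν = staircaseWeight i c ν + if c < ν i then 1 else 0 := by
  have h (k : Fin n) : ν k - (c + if (k : ℕ) < i + 1 then 0 else 1) =
      (ν k - (c + if (k : ℕ) < i then 0 else 1)) +
        if k = i then (if c < ν i then 1 else 0) else 0 := by
    rcases eq_or_ne k i with rfl | hk
    · simp only [lt_add_one, lt_irrefl, if_true, if_false]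
      split_ifs <;> lia
    · have hlt : (k : ℕ) < i + 1 ↔ (k : ℕ) < i := by
        have := Fin.val_ne_of_ne hk
        lia
      simp [hk, hlt]
  simp only [staircaseWeight, h, sum_add_distrib, sum_ite_eq', mem_univ, if_true]

lemma staircaseWeight_mono (c : ℕ) (ν : Fin n → ℕ) : Monotone fun j => staircaseWeight j c ν :=
  fun j j' h => sum_le_sum fun i _ => by split_ifs <;> lia

lemma sq_eq_add_sum_tsub {x M : ℕ} (h : x ≤ M) :
    x ^ 2 = x + 2 * ∑ c ∈ range M, (x - (c + 1)) := by
  induction M generalizing x with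
  | zero => simp [Nat.le_zero.1 h]
  | succ M ih =>
    rcases x with - | x
    · simp
    · rw [sum_range_succ']
      simp only [Nat.add_sub_add_right, zero_add, add_tsub_cancel_right]
      linarith [ih (Nat.le_of_succ_le_succ h)]

lemma sqSum_eq_staircaseWeight {ν : Fin n → ℕ} {M : ℕ} (h : ∀ i, ν i ≤ M) :
    sqSum ν = staircaseWeight n 0 ν + 2 * ∑ c ∈ range M, staircaseWeight 0 c ν := by
  simp only [sqSum, staircaseWeight, Fin.is_lt, not_lt_zero, if_true, if_false, add_zero,
    tsub_zero, sq_eq_add_sum_tsub (h _), sum_add_distrib]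
  rw [sum_comm, mul_sum]

lemma StaircaseLE.sqSum_le {ν η : Fin n → ℕ} (h : StaircaseLE ν η) : sqSum ν ≤ sqSum η := by
  obtain ⟨M, hM⟩ := (Set.finite_range (ν + η)).bddAbove
  have hM' (i : Fin n) : ν i + η i ≤ M := hM ⟨i, rfl⟩
  rw [sqSum_eq_staircaseWeight fun i => (Nat.le_add_right _ _).trans (hM' i),
    sqSum_eq_staircaseWeight fun i => (Nat.le_add_left _ _).trans (hM' i)]
  exact add_le_add (h n le_rfl 0) (Nat.mul_le_mul_left 2 (sum_le_sum fun c _ => h 0 n.zero_le c))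

lemma staircaseWeight_comp_adj {k : Fin N} {j : ℕ} (hj : j ≠ k + 1) (c : ℕ)
    (ν : Fin (N + 1) → ℕ) : staircaseWeight j c (ν ∘ adj k) = staircaseWeight j c ν := by
  have h (i : Fin (N + 1)) : (i : ℕ) < j ↔ (adj k i : ℕ) < j := by
    rcases eq_or_ne i k.castSucc with rfl | h₁
    · rw [Equiv.swap_apply_left, Fin.val_castSucc, Fin.val_succ]
      lia
    rcases eq_or_ne i k.succ with rfl | h₂
    · rw [Equiv.swap_apply_right, Fin.val_castSucc, Fin.val_succ]
      lia
    · rw [Equiv.swap_apply_of_ne_of_ne h₁ h₂]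
  refine Eq.trans (sum_congr rfl fun i _ => ?_) (Equiv.sum_comp (adj k) _)
  rw [Function.comp_apply, if_congr (h i) rfl rfl]

lemma staircaseLE_of_forall_ne {k : Fin N} {ν η : Fin (N + 1) → ℕ}
    (hη : η k.succ ≤ η k.castSucc)
    (h : ∀ j ≤ N + 1, j ≠ k + 1 → ∀ c, staircaseWeight j c ν ≤ staircaseWeight j c η) :
    StaircaseLE ν η := by
  intro j hj c
  rcases ne_or_eq j (k + 1) with hjk | rfl
  · exact h j hj hjk c
  have below := h k (by lia) (by lia) c
  have above := h (k + 2) (by lia) (by lia) c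
  have hν₁ := staircaseWeight_succ k.castSucc c ν
  have hν₂ := staircaseWeight_succ k.succ c ν
  have hη₁ := staircaseWeight_succ k.castSucc c η
  have hη₂ := staircaseWeight_succ k.succ c η
  simp only [Fin.val_castSucc, Fin.val_succ, add_assoc, Nat.reduceAdd] at hν₁ hν₂ hη₁ hη₂
  split_ifs at hν₁ hν₂ hη₁ hη₂ <;> lia

lemma StaircaseLE.comp_adj_right {k : Fin N} {ν η : Fin (N + 1) → ℕ} (h : StaircaseLE ν η)
    (hη : η k.castSucc ≤ η k.succ) : StaircaseLE ν (η ∘ adj k) :=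
  staircaseLE_of_forall_ne (k := k) (by simpa using hη) fun j hj hjk c => by
    rw [staircaseWeight_comp_adj hjk]
    exact h j hj c

lemma StaircaseLE.comp_adj {k : Fin N} {ν η : Fin (N + 1) → ℕ} (h : StaircaseLE ν η)
    (hη : η k.castSucc ≤ η k.succ) : StaircaseLE (ν ∘ adj k) (η ∘ adj k) :=
  staircaseLE_of_forall_ne (k := k) (by simpa using hη) fun j hj hjk c => by
    rw [staircaseWeight_comp_adj hjk, staircaseWeight_comp_adj hjk]
    exact h j hj c

lemma not_staircaseLE_comp_adj {k : Fin N} {η : Fin (N + 1) → ℕ}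
    (hη : η k.castSucc < η k.succ) : ¬StaircaseLE (η ∘ adj k) η := by
  intro h
  have hk := h (k + 1) (by lia) (η k.castSucc)
  have h₁ := staircaseWeight_succ k.castSucc (η k.castSucc) (η ∘ adj k)
  have h₂ := staircaseWeight_succ k.castSucc (η k.castSucc) η
  simp only [Function.comp_apply, Equiv.swap_apply_left, Fin.val_castSucc, hη, lt_irrefl,
    if_true, if_false, staircaseWeight_comp_adj (Nat.lt_succ_self k).ne] at h₁ h₂
  lia

lemma StaircaseLE.comp_perm_eq {ζ : Fin n → ℕ} {σ : Equiv.Perm (Fin n)} (hζ : Monotone ζ)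
    (h : StaircaseLE (ζ ∘ σ) ζ) : ζ ∘ σ = ζ := by
  have hle (i : Fin n) : ζ (σ i) ≤ ζ i := by
    have hζ₀ : staircaseWeight (i + 1) (ζ i) ζ = staircaseWeight 0 (ζ i) ζ :=
      sum_congr rfl fun k _ => by
        rcases le_or_gt k i with hk | hk
        · have := hζ hk
          split_ifs <;> lia
        · rw [if_neg (by rw [Fin.lt_def] at hk; lia), if_neg (Nat.not_lt_zero _)]
    have hσ : staircaseWeight 0 (ζ i) (ζ ∘ σ) = staircaseWeight 0 (ζ i) ζ := by
      simp only [staircaseWeight, not_lt_zero, if_false, Function.comp_apply]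
      exact Equiv.sum_comp σ fun k => ζ k - (ζ i + 1)
    have hmono := staircaseWeight_mono (ζ i) (ζ ∘ σ) (Nat.zero_le i)
    have hstep := staircaseWeight_succ i (ζ i) (ζ ∘ σ)
    have hi := h (i + 1) i.is_lt (ζ i)
    simp only [Function.comp_apply] at hmono hstep
    split_ifs at hstep <;> lia
  funext i
  exact (sum_eq_sum_iff_of_le fun j _ => hle j).1 (Equiv.sum_comp σ ζ) i (mem_univ i)

/-- The exponent of the leading term of the raising operator: the first row is lengthened by a box
and moved to the end. -/
def raise (η : Fin (N + 1) → ℕ) : Fin (N + 1) → ℕ :=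
  η ∘ finRotate (N + 1) + Pi.single (Fin.last N) 1

@[simp] lemma raise_castSucc (η : Fin (N + 1) → ℕ) (i : Fin N) :
    raise η i.castSucc = η i.succ := by
  simp [raise]

@[simp] lemma raise_last (η : Fin (N + 1) → ℕ) : raise η (Fin.last N) = η 0 + 1 := by
  simp [raise]

lemma staircaseWeight_raise_of_le {j : ℕ} (hj : j ≤ N) (c : ℕ) (ν : Fin (N + 1) → ℕ) :
    staircaseWeight j c (raise ν) = staircaseWeight (j + 1) c ν := by
  rw [staircaseWeight, staircaseWeight, Fin.sum_univ_castSucc, Fin.sum_univ_succ, add_comm]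
  simp [hj.not_gt, Nat.add_sub_add_right]

lemma staircaseWeight_raise_zero (ν : Fin (N + 1) → ℕ) :
    staircaseWeight (N + 1) 0 (raise ν) = staircaseWeight (N + 1) 0 ν + 1 := by
  rw [staircaseWeight, staircaseWeight, Fin.sum_univ_castSucc, Fin.sum_univ_succ]
  simp
  lia

lemma staircaseWeight_raise_succ (c : ℕ) (ν : Fin (N + 1) → ℕ) :
    staircaseWeight (N + 1) (c + 1) (raise ν) = staircaseWeight 1 c ν := by
  rw [staircaseWeight, staircaseWeight, Fin.sum_univ_castSucc, Fin.sum_univ_succ, add_comm]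
  simp [Nat.add_sub_add_right]

lemma StaircaseLE.raise {ν η : Fin (N + 1) → ℕ} (h : StaircaseLE ν η) :
    StaircaseLE (raise ν) (raise η) := by
  intro j hj c
  rcases hj.lt_or_eq with hj' | rfl
  · rw [staircaseWeight_raise_of_le (Nat.le_of_lt_succ hj'),
      staircaseWeight_raise_of_le (Nat.le_of_lt_succ hj')]
    exact h _ hj' c
  rcases c with - | c
  · rw [staircaseWeight_raise_zero, staircaseWeight_raise_zero]
    exact Nat.succ_le_succ (h _ le_rfl 0)
  · rw [staircaseWeight_raise_succ, staircaseWeight_raise_succ]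
    exact h 1 (Nat.le_add_left 1 N) c

end StaircaseOrder

section Legs

variable {n N : ℕ} {qv tv : K}

/-- The length of row `k` of `η` as seen from row `i`: the rows before `i` count as longer by one
box. Leg lengths and colengths compare these lengths with the length of row `i`. -/
def relRow (η : Fin n → ℕ) (i k : Fin n) : ℕ := η k + if k < i then 1 else 0

lemma legCo_eq_sum (η : Fin n → ℕ) (i : Fin n) :
    legCo n η i = ∑ k, if η i < relRow η i k then 1 else 0 := by
  rw [legCo, card_filter, card_filter, ← sum_add_distrib]
  refine sum_congr rfl fun k _ => ?_
  rw [relRow]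
  rcases lt_trichotomy k i with h | rfl | h
  · simp [h, h.not_gt]
  · simp
  · simp [h, h.not_gt]

lemma leg_eq_sum (η : Fin n → ℕ) (i : Fin n) (j : ℕ) :
    leg n η i j = ∑ k, if k ≠ i ∧ j ≤ relRow η i k ∧ relRow η i k ≤ η i then 1 else 0 := by
  rw [leg, card_filter, card_filter, ← sum_add_distrib]
  refine sum_congr rfl fun k _ => ?_
  rw [relRow]
  rcases lt_trichotomy k i with h | rfl | h
  · simp [h, h.not_gt, h.ne]
  · simp
  · simp [h, h.not_gt, h.ne']

lemma leg_add_legCo {η : Fin n → ℕ} {i : Fin n} {j : ℕ} (h : j ≤ η i) :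
    leg n η i j + legCo n η i + 1 = ∑ k, if j ≤ relRow η i k then 1 else 0 := by
  have hi : ∑ k, (if k = i then 1 else 0) = 1 := by simp
  rw [leg_eq_sum, legCo_eq_sum, ← hi, ← sum_add_distrib, ← sum_add_distrib]
  refine sum_congr rfl fun k _ => ?_
  rcases eq_or_ne k i with rfl | hk
  · simp [relRow, h]
  · simp only [hk, ne_eq, not_false_eq_true, true_and, if_false, add_zero]
    split_ifs <;> lia

lemma leg_zero_add_legCo (η : Fin (N + 1) → ℕ) (i : Fin (N + 1)) :
    leg (N + 1) η i 0 + legCo (N + 1) η i = N := by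
  simpa using leg_add_legCo (η i).zero_le

/-- The product of `1 - q ^ (a(s) + 1) * t ^ (l(s) + 1)` over the nodes `s` of a composition: the
denominator in the evaluation of a nonsymmetric Macdonald polynomial. -/
noncomputable def hookProd (qv tv : K) (η : Fin n → ℕ) : K :=
  ∏ i, ∏ j ∈ Icc 1 (η i), (1 - qv ^ (η i - j + 1) * tv ^ (leg n η i j + 1))

/-- The product of `1 - q ^ (a'(s) + 1) * t ^ (n - l'(s))` over the nodes `s` of a composition: the
numerator in the evaluation of a nonsymmetric Macdonald polynomial. -/
noncomputable def boxProd (qv tv : K) (η : Fin n → ℕ) : K :=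
  ∏ i, ∏ j ∈ Icc 1 (η i), (1 - qv ^ j * tv ^ (n - legCo n η i))

/-- The eigenvalues of the Cherednik operators on the nonsymmetric Macdonald polynomial of `η`. -/
noncomputable def spectralVector (qv tv : K) (η : Fin n → ℕ) (i : Fin n) : K :=
  qv ^ η i * (tv ^ legCo n η i)⁻¹

@[to_additive sum_Icc_one_eq_sum_range]
lemma prod_Icc_one_eq_prod_range {M : Type*} [CommMonoid M] (f : ℕ → M) (m : ℕ) :
    ∏ j ∈ Icc 1 m, f j = ∏ j ∈ range m, f (j + 1) := by
  rw [range_eq_Ico, prod_Ico_add', zero_add]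
  rfl

@[to_additive]
lemma prod_prod_mul_eq_of_forall_ne {ι κ M : Type*} [Fintype ι] [CommMonoid M]
    {s : ι → Finset κ} {f g : ι → κ → M} {a : ι} {b : κ} (hb : b ∈ s a)
    (h : ∀ i j, ¬(i = a ∧ j = b) → f i j = g i j) :
    (∏ i, ∏ j ∈ s i, g i j) * f a b = (∏ i, ∏ j ∈ s i, f i j) * g a b := by
  classical
  have hab : (⟨a, b⟩ : Σ _ : ι, κ) ∈ univ.sigma s := mem_sigma.2 ⟨mem_univ a, hb⟩
  have herase : ∏ x ∈ (univ.sigma s).erase ⟨a, b⟩, f x.1 x.2 =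
      ∏ x ∈ (univ.sigma s).erase ⟨a, b⟩, g x.1 x.2 :=
    prod_congr rfl fun x hx => h x.1 x.2 fun ⟨h₁, h₂⟩ =>
      ne_of_mem_erase hx (Sigma.ext h₁ (heq_of_eq h₂))
  rw [prod_sigma', prod_sigma', ← mul_prod_erase _ _ hab, ← mul_prod_erase _ _ hab, herase]
  ac_rfl

section Raise

variable (η : Fin (N + 1) → ℕ)

lemma relRow_raise (i k : Fin (N + 1)) :
    relRow (raise η) ((finRotate (N + 1)).symm i) ((finRotate (N + 1)).symm k) =
      relRow η i k + if i = 0 then 1 else 0 := by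
  rw [relRow, relRow]
  cases i using Fin.cases <;> cases k using Fin.cases <;>
    simp only [finRotate_symm_zero, finRotate_symm_succ, raise_last, raise_castSucc] <;>
    simp [Fin.castSucc_lt_last, Fin.succ_ne_zero, Fin.le_last]

lemma raise_finRotate_symm (i : Fin (N + 1)) :
    raise η ((finRotate (N + 1)).symm i) = η i + if i = 0 then 1 else 0 := by
  cases i using Fin.cases with
  | zero => rw [finRotate_symm_zero, raise_last, if_pos rfl]
  | succ i => rw [finRotate_symm_succ, raise_castSucc, if_neg i.succ_ne_zero, add_zero]

lemma legCo_raise (i : Fin (N + 1)) :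
    legCo (N + 1) (raise η) ((finRotate (N + 1)).symm i) = legCo (N + 1) η i := by
  rw [legCo_eq_sum, legCo_eq_sum, ← Equiv.sum_comp (finRotate (N + 1)).symm]
  simp only [relRow_raise, raise_finRotate_symm, add_lt_add_iff_right]

lemma leg_raise (i : Fin (N + 1)) (j : ℕ) :
    leg (N + 1) (raise η) ((finRotate (N + 1)).symm i) (j + if i = 0 then 1 else 0) =
      leg (N + 1) η i j := by
  rw [leg_eq_sum, leg_eq_sum, ← Equiv.sum_comp (finRotate (N + 1)).symm]
  simp only [relRow_raise, raise_finRotate_symm, add_le_add_iff_right, ne_eq,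
    EmbeddingLike.apply_eq_iff_eq]

lemma spectralVector_raise_castSucc (i : Fin N) :
    spectralVector qv tv (raise η) i.castSucc = spectralVector qv tv η i.succ := by
  have h := legCo_raise η i.succ
  rw [finRotate_symm_succ] at h
  rw [spectralVector, spectralVector, h, raise_castSucc]

lemma spectralVector_raise_last :
    spectralVector qv tv (raise η) (Fin.last N) = qv * spectralVector qv tv η 0 := by
  have h := legCo_raise η 0
  rw [finRotate_symm_zero] at h
  rw [spectralVector, spectralVector, h, raise_last, pow_succ', mul_assoc]

lemma leg_raise_of_ne {i : Fin (N + 1)} (hi : i ≠ 0) (j : ℕ) :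
    leg (N + 1) (raise η) ((finRotate (N + 1)).symm i) j = leg (N + 1) η i j := by
  simpa [hi] using leg_raise η i j

lemma leg_raise_last_succ (j : ℕ) :
    leg (N + 1) (raise η) ((finRotate (N + 1)).symm 0) (j + 1) = leg (N + 1) η 0 j :=
  leg_raise η 0 j

lemma hookProd_raise :
    hookProd qv tv (raise η) =
      (1 - qv ^ (η 0 + 1) * tv ^ (leg (N + 1) η 0 0 + 1)) * hookProd qv tv η := by
  rw [hookProd, hookProd, ← Equiv.prod_comp (finRotate (N + 1)).symm, Fin.prod_univ_succ,
    Fin.prod_univ_succ, ← mul_assoc]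
  congr 1
  · rw [raise_finRotate_symm, if_pos rfl, prod_Icc_one_eq_prod_range, prod_range_succ',
      prod_Icc_one_eq_prod_range, mul_comm]
    simp only [leg_raise_last_succ, Nat.add_sub_add_right, zero_add, add_tsub_cancel_right]
  · refine prod_congr rfl fun i _ => ?_
    simp only [raise_finRotate_symm, i.succ_ne_zero, if_false, add_zero,
      leg_raise_of_ne η i.succ_ne_zero]

lemma boxProd_raise :
    boxProd qv tv (raise η) =
      (1 - qv ^ (η 0 + 1) * tv ^ (leg (N + 1) η 0 0 + 1)) * boxProd qv tv η := by
  have hleg : N + 1 - legCo (N + 1) η 0 = leg (N + 1) η 0 0 + 1 := by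
    have := leg_zero_add_legCo η 0
    lia
  rw [boxProd, boxProd, ← Equiv.prod_comp (finRotate (N + 1)).symm, Fin.prod_univ_succ,
    Fin.prod_univ_succ, ← mul_assoc]
  simp only [legCo_raise, raise_finRotate_symm, Fin.succ_ne_zero, if_false, if_true, add_zero]
  rw [prod_Icc_one_eq_prod_range, prod_range_succ, prod_Icc_one_eq_prod_range, hleg,
    mul_comm (∏ _ ∈ range _, _)]

lemma lTot_raise : lTot (N + 1) (raise η) = leg (N + 1) η 0 0 + lTot (N + 1) η := by
  have hrange (f : ℕ → ℕ) (m : ℕ) : ∑ j ∈ Icc 1 m, f j = ∑ j ∈ range m, f (j + 1) := by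
    rw [range_eq_Ico, sum_Ico_add', zero_add]
    rfl
  rw [lTot, lTot, ← Equiv.sum_comp (finRotate (N + 1)).symm, Fin.sum_univ_succ,
    Fin.sum_univ_succ, ← add_assoc]
  congr 1
  · rw [raise_finRotate_symm, if_pos rfl, hrange, sum_range_succ', hrange, add_comm]
    simp only [leg_raise_last_succ]
  · refine sum_congr rfl fun i _ => ?_
    simp only [raise_finRotate_symm, i.succ_ne_zero, if_false, add_zero,
      leg_raise_of_ne η i.succ_ne_zero]

end Raise

section Swap

variable {k : Fin N} {η : Fin (N + 1) → ℕ}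

lemma adj_lt_adj_iff {i j : Fin (N + 1)} (h₁ : i = k.castSucc → j ≠ k.succ)
    (h₂ : i = k.succ → j ≠ k.castSucc) : adj k j < adj k i ↔ j < i := by
  have hval (l : Fin (N + 1)) : (adj k l : ℕ) =
      if (l : ℕ) = k then (k + 1 : ℕ) else if (l : ℕ) = k + 1 then (k : ℕ) else l := by
    rw [Equiv.swap_apply_def]
    simp only [apply_ite Fin.val, Fin.ext_iff, Fin.val_castSucc, Fin.val_succ]
  simp only [Fin.ext_iff, Fin.val_castSucc, Fin.val_succ, ne_eq] at h₁ h₂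
  rw [Fin.lt_def, Fin.lt_def, hval, hval]
  split_ifs <;> lia

lemma relRow_comp_adj {i j : Fin (N + 1)} (h₁ : i = k.castSucc → j ≠ k.succ)
    (h₂ : i = k.succ → j ≠ k.castSucc) :
    relRow (η ∘ adj k) (adj k i) (adj k j) = relRow η i j := by
  rw [relRow, relRow, Function.comp_apply, Equiv.swap_apply_self,
    if_congr (adj_lt_adj_iff h₁ h₂) rfl rfl]

lemma relRow_castSucc_succ (η : Fin (N + 1) → ℕ) : relRow η k.castSucc k.succ = η k.succ := by
  simp [relRow, k.castSucc_lt_succ.not_gt]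

lemma relRow_succ_castSucc (η : Fin (N + 1) → ℕ) :
    relRow η k.succ k.castSucc = η k.castSucc + 1 := by
  simp [relRow, k.castSucc_lt_succ]

lemma legCo_comp_adj (hη : η k.castSucc < η k.succ) (i : Fin (N + 1)) :
    legCo (N + 1) (η ∘ adj k) (adj k i) = legCo (N + 1) η i := by
  rw [legCo_eq_sum, legCo_eq_sum, ← Equiv.sum_comp (adj k)]
  refine sum_congr rfl fun j _ => if_congr ?_ rfl rfl
  rw [Function.comp_apply, Equiv.swap_apply_self]
  by_cases h₁ : i = k.castSucc ∧ j = k.succ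
  · obtain ⟨rfl, rfl⟩ := h₁
    rw [Equiv.swap_apply_left, Equiv.swap_apply_right, relRow_succ_castSucc,
      relRow_castSucc_succ, Function.comp_apply, Equiv.swap_apply_left]
    lia
  by_cases h₂ : i = k.succ ∧ j = k.castSucc
  · obtain ⟨rfl, rfl⟩ := h₂
    rw [Equiv.swap_apply_left, Equiv.swap_apply_right, relRow_succ_castSucc,
      relRow_castSucc_succ, Function.comp_apply, Equiv.swap_apply_right]
    lia
  rw [relRow_comp_adj (not_and.1 h₁) (not_and.1 h₂)]

lemma leg_comp_adj (hη : η k.castSucc < η k.succ) (i : Fin (N + 1)) (j : ℕ) :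
    leg (N + 1) η i j = leg (N + 1) (η ∘ adj k) (adj k i) j +
      if i = k.succ ∧ j = η k.castSucc + 1 then 1 else 0 := by
  have hsum : ∑ r, (if r = k.castSucc then
      if i = k.succ ∧ j = η k.castSucc + 1 then 1 else 0 else 0) =
        if i = k.succ ∧ j = η k.castSucc + 1 then 1 else 0 := by
    rw [sum_ite_eq', if_pos (mem_univ _)]
  rw [leg_eq_sum (η ∘ adj k), ← Equiv.sum_comp (adj k), leg_eq_sum, ← hsum, ← sum_add_distrib]
  refine sum_congr rfl fun r _ => ?_
  simp only [Function.comp_apply, Equiv.swap_apply_self, (adj k).injective.ne_iff]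
  by_cases h₁ : i = k.castSucc ∧ r = k.succ
  · obtain ⟨rfl, rfl⟩ := h₁
    rw [Equiv.swap_apply_left, Equiv.swap_apply_right, relRow_succ_castSucc,
      relRow_castSucc_succ, Function.comp_apply, Equiv.swap_apply_left,
      if_neg k.castSucc_lt_succ.ne', if_neg (by lia), if_neg (by lia)]
  by_cases h₂ : i = k.succ ∧ r = k.castSucc
  · obtain ⟨rfl, rfl⟩ := h₂
    rw [Equiv.swap_apply_left, Equiv.swap_apply_right, relRow_succ_castSucc,
      relRow_castSucc_succ, Function.comp_apply, Equiv.swap_apply_right, if_pos rfl]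
    simp only [k.castSucc_lt_succ.ne, ne_eq, not_false_eq_true, true_and]
    split_ifs <;> lia
  rw [relRow_comp_adj (not_and.1 h₁) (not_and.1 h₂), ← ite_and,
    if_neg (by tauto : ¬(r = k.castSucc ∧ i = k.succ ∧ _)), add_zero]

lemma leg_succ_add_legCo_succ (hη : η k.castSucc < η k.succ) :
    leg (N + 1) η k.succ (η k.castSucc + 1) + legCo (N + 1) η k.succ =
      legCo (N + 1) η k.castSucc := by
  have h := leg_add_legCo (i := k.succ) (Nat.succ_le_of_lt hη)
  have hsum : ∑ r, (if r = k.castSucc then 1 else 0) = 1 := by simp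
  have hr (r : Fin (N + 1)) : (if η k.castSucc + 1 ≤ relRow η k.succ r then 1 else 0) =
      (if η k.castSucc < relRow η k.castSucc r then 1 else 0) +
        if r = k.castSucc then 1 else 0 := by
    rcases eq_or_ne r k.castSucc with rfl | hne
    · simp [relRow]
    · have hlt : r < k.succ ↔ r < k.castSucc := by
        rw [Fin.lt_def, Fin.lt_def, Fin.val_succ, Fin.val_castSucc]
        have := Fin.val_ne_of_ne hne
        rw [Fin.val_castSucc] at this
        lia
      rw [relRow, relRow, if_congr hlt rfl rfl, if_neg hne, add_zero]
      rfl
  simp only [Nat.succ_eq_add_one, hr, sum_add_distrib, hsum, ← legCo_eq_sum] at h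
  lia

lemma spectralVector_comp_adj (hη : η k.castSucc < η k.succ) (i : Fin (N + 1)) :
    spectralVector qv tv (η ∘ adj k) i = spectralVector qv tv η (adj k i) := by
  have h := legCo_comp_adj hη (adj k i)
  rw [Equiv.swap_apply_self] at h
  rw [spectralVector, spectralVector, h, Function.comp_apply]

lemma spectralVector_succ_eq (ht : tv ≠ 0) (hη : η k.castSucc < η k.succ) :
    spectralVector qv tv η k.succ =
      qv ^ (η k.succ - η k.castSucc) * tv ^ leg (N + 1) η k.succ (η k.castSucc + 1) *
        spectralVector qv tv η k.castSucc := by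
  rw [spectralVector, spectralVector, ← leg_succ_add_legCo_succ hη, pow_add,
    ← Nat.sub_add_cancel hη.le, pow_add, Nat.add_sub_cancel]
  field_simp

lemma boxProd_comp_adj (hη : η k.castSucc < η k.succ) :
    boxProd qv tv (η ∘ adj k) = boxProd qv tv η := by
  rw [boxProd, boxProd, ← Equiv.prod_comp (adj k)]
  simp only [legCo_comp_adj hη, Function.comp_apply, Equiv.swap_apply_self]

lemma lTot_comp_adj (hη : η k.castSucc < η k.succ) :
    lTot (N + 1) η = lTot (N + 1) (η ∘ adj k) + 1 := by
  have hsum := sum_sum_add_eq_of_forall_ne (s := fun i => Icc 1 (η i)) (a := k.succ)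
    (f := leg (N + 1) η) (g := fun i => leg (N + 1) (η ∘ adj k) (adj k i))
    (mem_Icc.2 ⟨Nat.le_add_left 1 _, hη⟩) fun i j h => by
      rw [leg_comp_adj hη i j, if_neg h, add_zero]
  have hleg := leg_comp_adj hη k.succ (η k.castSucc + 1)
  rw [if_pos ⟨rfl, rfl⟩] at hleg
  have hcomp : lTot (N + 1) (η ∘ adj k) =
      ∑ i, ∑ j ∈ Icc 1 (η i), leg (N + 1) (η ∘ adj k) (adj k i) j := by
    rw [lTot, ← Equiv.sum_comp (adj k)]
    simp only [Function.comp_apply, Equiv.swap_apply_self]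
  rw [hcomp, lTot]
  lia

lemma hookProd_comp_adj (hη : η k.castSucc < η k.succ) :
    hookProd qv tv (η ∘ adj k) * (1 - qv ^ (η k.succ - η k.castSucc) *
        tv ^ (leg (N + 1) η k.succ (η k.castSucc + 1) + 1)) =
      hookProd qv tv η * (1 - qv ^ (η k.succ - η k.castSucc) *
        tv ^ leg (N + 1) η k.succ (η k.castSucc + 1)) := by
  have hprod := prod_prod_mul_eq_of_forall_ne (s := fun i => Icc 1 (η i)) (a := k.succ)
    (f := fun i j => 1 - qv ^ (η i - j + 1) * tv ^ (leg (N + 1) η i j + 1))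
    (g := fun i j => 1 - qv ^ (η i - j + 1) * tv ^ (leg (N + 1) (η ∘ adj k) (adj k i) j + 1))
    (mem_Icc.2 ⟨Nat.le_add_left 1 _, hη⟩) fun i j h => by
      rw [leg_comp_adj hη i j, if_neg h, add_zero]
  have hleg := leg_comp_adj hη k.succ (η k.castSucc + 1)
  rw [if_pos ⟨rfl, rfl⟩] at hleg
  have harm : η k.succ - (η k.castSucc + 1) + 1 = η k.succ - η k.castSucc := by lia
  have hcomp : hookProd qv tv (η ∘ adj k) = ∏ i, ∏ j ∈ Icc 1 (η i),
      (1 - qv ^ (η i - j + 1) * tv ^ (leg (N + 1) (η ∘ adj k) (adj k i) j + 1)) := by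
    rw [hookProd, ← Equiv.prod_comp (adj k)]
    simp only [Function.comp_apply, Equiv.swap_apply_self]
  rw [hcomp, hookProd]
  simpa only [harm, ← hleg] using hprod

end Swap
end Legs

section CherednikOperators

open HeckeRelations

variable {N : ℕ} {qv tv : K} {T : ℕ → P (N + 1) →ₗ[K] P (N + 1)}

lemma ascProd_apply_of_eq_smul {M : Type*} [AddCommGroup M] [Module K M] {g : ℕ → Module.End K M}
    {c : K} {v : M} {i m : ℕ} (h : ∀ k < m, g (i + k) v = c • v) : ascProd g i m v = c ^ m • v := by
  induction m with
  | zero => rw [ascProd_zero, pow_zero, one_smul, Module.End.one_apply]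
  | succ m ih =>
    rw [ascProd_succ', Module.End.mul_apply, h m m.lt_succ_self, map_smul,
      ih fun k hk => h k (hk.trans m.lt_succ_self), smul_smul, pow_succ']

lemma Yop_eq_ascProd (i : Fin (N + 1)) :
    Yop (N + 1) qv tv T i = (tv ^ (N - i : ℕ))⁻¹ •
      (ascProd (M := Module.End K (P (N + 1))) T i (N - i) * (rotation N qv).toLinearMap *
        ascProd (M := Module.End K (P (N + 1))) (Tinv (N + 1) tv T) 0 i) := by
  rw [Yop, omegaOp_eq_rotation, List.range_eq_range', Nat.add_sub_cancel,
    foldr_comp_eq_ascProd fun _ _ => rfl, foldr_comp_eq_ascProd fun _ _ => rfl]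
  rfl

lemma Yop_apply_of_T_eq_smul (h₀ : tv ≠ 0) {G : P (N + 1)} (hG : ∀ k : Fin N, T k G = tv • G)
    (i : Fin (N + 1)) : Yop (N + 1) qv tv T i G =
      (tv ^ N)⁻¹ • ascProd (M := Module.End K (P (N + 1))) T i (N - i) (rotation N qv G) := by
  have hinv : ∀ k < (i : ℕ), Tinv (N + 1) tv T (0 + k) G = tv⁻¹ • G := fun k hk => by
    rw [zero_add, Tinv, LinearMap.add_apply, LinearMap.sub_apply, LinearMap.smul_apply,
      LinearMap.smul_apply, LinearMap.id_apply, hG ⟨k, by lia⟩, inv_smul_smul₀ h₀,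
      sub_add_cancel]
  have hpow : (tv ^ (N - i : ℕ))⁻¹ * tv⁻¹ ^ (i : ℕ) = (tv ^ N)⁻¹ := by
    rw [inv_pow, ← mul_inv, ← pow_add, Nat.sub_add_cancel (by lia)]
  rw [Yop_eq_ascProd, LinearMap.smul_apply, Module.End.mul_apply, Module.End.mul_apply,
    ascProd_apply_of_eq_smul hinv, map_smul, map_smul, smul_smul, hpow, AlgHom.toLinearMap_apply]

lemma principalEval_ascProd_T (hT : IsDL (N + 1) tv T) (h₀ : tv ≠ 0) (h₁ : tv ≠ 1) {i m : ℕ}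
    (hm : i + m ≤ N) (f : P (N + 1)) :
    principalEval tv (ascProd (M := Module.End K (P (N + 1))) T i m f) =
      tv ^ m * principalEval tv f := by
  induction m generalizing f with
  | zero => rw [ascProd_zero, pow_zero, one_mul, Module.End.one_apply]
  | succ m ih =>
    rw [ascProd_succ', Module.End.mul_apply, ih (by lia),
      principalEval_T hT h₀ h₁ ⟨i + m, by lia⟩, pow_succ, mul_assoc]

lemma principalEval_Yop_zero (hT : IsDL (N + 1) tv T) (h₀ : tv ≠ 0) (h₁ : tv ≠ 1)
    (f : P (N + 1)) :
    principalEval tv (Yop (N + 1) qv tv T 0 f) = principalEval tv (rotation N qv f) := by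
  rw [Yop_eq_ascProd, LinearMap.smul_apply, map_smul, Fin.val_zero, tsub_zero, ascProd_zero,
    mul_one, Module.End.mul_apply, principalEval_ascProd_T hT h₀ h₁ N.zero_add.le, smul_eq_mul,
    inv_mul_cancel_left₀ (pow_ne_zero N h₀), AlgHom.toLinearMap_apply]

lemma raising_apply (f : P (N + 1)) :
    raising N (rotation N qv).toLinearMap (mulX N) f = X (Fin.last N) * rotation N qv f := by
  rw [raising, Module.End.mul_apply, mulX_apply N.lt_succ_self]
  rfl

section Relations

variable (hT : IsDL (N + 1) tv T) (h₀ : tv ≠ 0) (hq : qv ≠ 0) (f : P (N + 1))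
include hT h₀ hq

lemma Yop_T_of_ne {k : Fin N} {i : Fin (N + 1)} (hi : i ≠ k.castSucc) (hi' : i ≠ k.succ) :
    Yop (N + 1) qv tv T i (T k f) = T k (Yop (N + 1) qv tv T i f) := by
  have h := heckeRelations_unitT hT h₀ hq
  rw [Yop_eq_cherednik hT h₀, ← coe_unitT hT h₀ k.is_lt]
  rcases lt_or_gt_of_ne hi with hik | hik
  · exact (LinearMap.congr_fun (h.commute_T_cherednik_of_lt h₀ hik k.is_lt).eq f).symm
  · have hik' : (k : ℕ) + 1 < i := lt_of_le_of_ne hik fun h => hi' (Fin.ext h.symm)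
    exact (LinearMap.congr_fun (h.commute_T_cherednik_of_gt h₀ hik' (by lia)).eq f).symm

lemma T_Yop_succ (k : Fin N) :
    T k (Yop (N + 1) qv tv T k.succ f) =
      Yop (N + 1) qv tv T k.castSucc (T k f) + (1 - tv) • Yop (N + 1) qv tv T k.castSucc f := by
  have h := (heckeRelations_unitT hT h₀ hq).T_mul_cherednik_succ h₀ k.is_lt
  rw [mul_add, mul_smul_comm, mul_one] at h
  rw [Yop_eq_cherednik hT h₀, Yop_eq_cherednik hT h₀, ← coe_unitT hT h₀ k.is_lt]
  exact LinearMap.congr_fun h f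

lemma Yop_succ_T (k : Fin N) :
    Yop (N + 1) qv tv T k.succ (T k f) =
      T k (Yop (N + 1) qv tv T k.castSucc f) + (1 - tv) • Yop (N + 1) qv tv T k.castSucc f := by
  have h := (heckeRelations_unitT hT h₀ hq).cherednik_succ_mul_T h₀ k.is_lt
  rw [add_mul, smul_mul_assoc, one_mul] at h
  rw [Yop_eq_cherednik hT h₀, Yop_eq_cherednik hT h₀, ← coe_unitT hT h₀ k.is_lt]
  exact LinearMap.congr_fun h f

lemma Yop_castSucc_X_mul_rotation (i : Fin N) :
    Yop (N + 1) qv tv T i.castSucc (X (Fin.last N) * rotation N qv f) =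
      X (Fin.last N) * rotation N qv (Yop (N + 1) qv tv T i.succ f) := by
  rw [Yop_eq_cherednik hT h₀, Yop_eq_cherednik hT h₀, ← raising_apply, ← raising_apply]
  exact LinearMap.congr_fun
    ((heckeRelations_unitT hT h₀ hq).cherednik_mul_raising h₀ i.is_lt) f

lemma Yop_last_X_mul_rotation :
    Yop (N + 1) qv tv T (Fin.last N) (X (Fin.last N) * rotation N qv f) =
      qv • (X (Fin.last N) * rotation N qv (Yop (N + 1) qv tv T 0 f)) := by
  rw [Yop_eq_cherednik hT h₀, Yop_eq_cherednik hT h₀, ← raising_apply, ← raising_apply]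
  exact LinearMap.congr_fun ((heckeRelations_unitT hT h₀ hq).cherednik_last_mul_raising h₀) f

end Relations

end CherednikOperators

section NonsymmetricMacdonald

variable {N : ℕ} {qv tv : K} {T : ℕ → P (N + 1) →ₗ[K] P (N + 1)}

/-- The parameters satisfy no multiplicative relation with nonnegative exponents. -/
structure IsGeneric (qv tv : K) : Prop where
  q_ne_zero : qv ≠ 0
  t_ne_zero : tv ≠ 0
  pow_mul_pow_ne_one : ∀ a b : ℕ, a + b ≠ 0 → qv ^ a * tv ^ b ≠ 1

lemma IsGeneric.t_pow_ne_one (hqt : IsGeneric qv tv) {b : ℕ} (hb : b ≠ 0) : tv ^ b ≠ 1 := by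
  simpa using hqt.pow_mul_pow_ne_one 0 b (by lia)

lemma IsGeneric.t_ne_one (hqt : IsGeneric qv tv) : tv ≠ 1 := by
  simpa using hqt.t_pow_ne_one one_ne_zero

/-- The nonsymmetric Macdonald polynomials, here with `StaircaseLE` as the order of the
triangularity condition. -/
structure IsNonsymmMacdonald (qv tv : K) (T : ℕ → P (N + 1) →ₗ[K] P (N + 1))
    (η : Fin (N + 1) → ℕ) (E : P (N + 1)) : Prop where
  cherednik : ∀ i, Yop (N + 1) qv tv T i E = spectralVector qv tv η i • E
  support : ∀ ν, coeffAt ν E ≠ 0 → StaircaseLE ν η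
  coeffAt_self : coeffAt η E = 1

lemma isNonsymmMacdonald_zero (hT : IsDL (N + 1) tv T) (h₀ : tv ≠ 0) :
    IsNonsymmMacdonald qv tv T 0 1 where
  cherednik i := by
    have hone (k : Fin N) : T k 1 = tv • (1 : P (N + 1)) := by
      rw [T_of_rename_eq hT (map_one _), smul_eq_C_mul]
    have hlegCo : legCo (N + 1) 0 i = i := by
      simp [legCo, filter_gt_eq_Iio]
    have hpow : tv ^ N = tv ^ (N - i : ℕ) * tv ^ (i : ℕ) := by
      rw [← pow_add, Nat.sub_add_cancel (by lia)]
    rw [Yop_apply_of_T_eq_smul h₀ hone, map_one,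
      ascProd_apply_of_eq_smul fun k hk => hone ⟨i + k, by lia⟩, smul_smul, spectralVector, hlegCo,
      hpow, mul_inv_rev, inv_mul_cancel_right₀ (pow_ne_zero _ h₀), Pi.zero_apply, pow_zero, one_mul]
  support ν hν := by
    rw [← C_1, coeffAt_C] at hν
    obtain rfl : 0 = ν := by
      by_contra h
      exact hν (if_neg h)
    exact fun _ _ _ => le_rfl
  coeffAt_self := by rw [← C_1, coeffAt_C, if_pos rfl]

lemma coeffAt_raise (ν : Fin (N + 1) → ℕ) (f : P (N + 1)) :
    coeffAt (raise ν) (X (Fin.last N) * rotation N qv f) = qv ^ ν 0 * coeffAt ν f := by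
  rw [raise, coeffAt_add_single_X_mul, coeffAt_rotation, Function.comp_apply, finRotate_last,
    Function.comp_assoc, Equiv.self_comp_symm, Function.comp_id]

lemma exists_eq_raise {ν : Fin (N + 1) → ℕ} (h : ν (Fin.last N) ≠ 0) : ∃ μ, ν = raise μ := by
  obtain ⟨μ, rfl⟩ := exists_eq_add_single h
  refine ⟨μ ∘ (finRotate (N + 1)).symm, ?_⟩
  rw [raise, Function.comp_assoc, Equiv.symm_comp_self, Function.comp_id]

lemma IsNonsymmMacdonald.raise (hT : IsDL (N + 1) tv T) (hqt : IsGeneric qv tv)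
    {η : Fin (N + 1) → ℕ} {E : P (N + 1)} (hE : IsNonsymmMacdonald qv tv T η E) :
    IsNonsymmMacdonald qv tv T (raise η)
      ((qv ^ η 0)⁻¹ • (X (Fin.last N) * rotation N qv E)) where
  cherednik i := by
    rw [map_smul, smul_comm]
    congr 1
    cases i using Fin.lastCases with
    | last =>
      rw [Yop_last_X_mul_rotation hT hqt.t_ne_zero hqt.q_ne_zero, hE.cherednik, map_smul,
        mul_smul_comm, smul_smul, spectralVector_raise_last]
    | cast i =>
      rw [Yop_castSucc_X_mul_rotation hT hqt.t_ne_zero hqt.q_ne_zero, hE.cherednik, map_smul,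
        mul_smul_comm, spectralVector_raise_castSucc]
  support ν hν := by
    rw [map_smul] at hν
    have hν' := right_ne_zero_of_smul hν
    obtain ⟨μ, rfl⟩ := exists_eq_raise fun h₀ => hν' (coeffAt_X_mul_of_eq_zero h₀ _)
    rw [coeffAt_raise] at hν'
    exact (hE.support μ (right_ne_zero_of_mul hν')).raise
  coeffAt_self := by
    rw [map_smul, coeffAt_raise, hE.coeffAt_self, mul_one, smul_eq_mul,
      inv_mul_cancel₀ (pow_ne_zero _ hqt.q_ne_zero)]

lemma IsNonsymmMacdonald.principalEval_raise (hT : IsDL (N + 1) tv T) (hqt : IsGeneric qv tv)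
    {η : Fin (N + 1) → ℕ} {E : P (N + 1)} (hE : IsNonsymmMacdonald qv tv T η E) :
    principalEval tv ((qv ^ η 0)⁻¹ • (X (Fin.last N) * rotation N qv E)) =
      tv ^ leg (N + 1) η 0 0 * principalEval tv E := by
  have hpow : tv ^ N = tv ^ leg (N + 1) η 0 0 * tv ^ legCo (N + 1) η 0 := by
    rw [← pow_add, leg_zero_add_legCo]
  have hq := pow_ne_zero (η 0) hqt.q_ne_zero
  have ht := pow_ne_zero (legCo (N + 1) η 0) hqt.t_ne_zero
  rw [map_smul, map_mul, principalEval_X, ← principalEval_Yop_zero hT hqt.t_ne_zero hqt.t_ne_one,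
    hE.cherednik, map_smul, spectralVector, Fin.val_last, hpow, smul_eq_mul, smul_eq_mul]
  field_simp

lemma comp_adj_comp_adj {α : Type*} (k : Fin N) (η : Fin (N + 1) → α) :
    (η ∘ adj k) ∘ adj k = η := by
  rw [Function.comp_assoc, ← Equiv.Perm.coe_mul, Equiv.swap_mul_self, Equiv.Perm.coe_one,
    Function.comp_id]

section Exchange

variable {k : Fin N} {η : Fin (N + 1) → ℕ} {E : P (N + 1)}

lemma IsNonsymmMacdonald.support_T (hT : IsDL (N + 1) tv T) (hη : η k.castSucc ≤ η k.succ)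
    (hE : IsNonsymmMacdonald qv tv T η E) {ν : Fin (N + 1) → ℕ} (hν : coeffAt ν (T k E) ≠ 0) :
    StaircaseLE ν (η ∘ adj k) := by
  intro j hj c
  by_contra! hlt
  refine hν (coeffAt_T_eq_zero hT (convexAlong_staircaseWeight k j c) (fun μ hμ => ⟨?_, ?_⟩) hlt)
  · by_contra h
    exact hμ.not_ge ((hE.support μ h).comp_adj_right hη j hj c)
  · by_contra h
    have hle := (hE.support _ h).comp_adj hη j hj c
    rw [comp_adj_comp_adj] at hle
    exact hμ.not_ge hle

/-- The ratio of the two spectral values exchanged by `T k`, for `η k.castSucc < η k.succ`. -/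
noncomputable def spectralRatio (qv tv : K) (k : Fin N) (η : Fin (N + 1) → ℕ) : K :=
  qv ^ (η k.succ - η k.castSucc) * tv ^ leg (N + 1) η k.succ (η k.castSucc + 1)

lemma IsGeneric.one_sub_spectralRatio_ne_zero (hqt : IsGeneric qv tv)
    (hη : η k.castSucc < η k.succ) : 1 - spectralRatio qv tv k η ≠ 0 :=
  sub_ne_zero.2 (hqt.pow_mul_pow_ne_one _ _ (by lia)).symm

/-- The combination of `E` and `T k E` which is the nonsymmetric Macdonald polynomial with the
exponents `η k.castSucc < η k.succ` exchanged. -/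
noncomputable def exchange (qv tv : K) (T : ℕ → P (N + 1) →ₗ[K] P (N + 1)) (k : Fin N)
    (η : Fin (N + 1) → ℕ) (E : P (N + 1)) : P (N + 1) :=
  tv⁻¹ • (T k E + ((1 - tv) / (1 - spectralRatio qv tv k η)) • E)

lemma IsNonsymmMacdonald.cherednik_exchange (hT : IsDL (N + 1) tv T) (hqt : IsGeneric qv tv)
    (hη : η k.castSucc < η k.succ) (hE : IsNonsymmMacdonald qv tv T η E) (i : Fin (N + 1)) :
    Yop (N + 1) qv tv T i (exchange qv tv T k η E) =
      spectralVector qv tv (η ∘ adj k) i • exchange qv tv T k η E := by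
  have hr := hqt.one_sub_spectralRatio_ne_zero hη
  have hy : spectralVector qv tv η k.succ =
      spectralRatio qv tv k η * spectralVector qv tv η k.castSucc :=
    spectralVector_succ_eq hqt.t_ne_zero hη
  set r := spectralRatio qv tv k η with hr_def
  set c := (1 - tv) / (1 - r) with hc_def
  have hc : (1 - tv) + c * r = c := by
    rw [hc_def]
    field_simp
    ring
  rw [exchange, ← hr_def, ← hc_def, map_smul, smul_comm, map_add, map_smul,
    spectralVector_comp_adj hη, hE.cherednik]
  congr 1
  have hc' := congrArg (C (σ := Fin (N + 1))) hc
  by_cases h₁ : i = k.castSucc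
  · subst h₁
    have hYT := T_Yop_succ hT hqt.t_ne_zero hqt.q_ne_zero E k
    rw [hE.cherednik, hE.cherednik, map_smul] at hYT
    rw [← sub_eq_iff_eq_add.2 hYT, Equiv.swap_apply_left, hy]
    simp only [smul_eq_C_mul, C_mul, C_add] at hc' ⊢
    linear_combination (-C (spectralVector qv tv η k.castSucc) * E) * hc'
  by_cases h₂ : i = k.succ
  · subst h₂
    rw [Yop_succ_T hT hqt.t_ne_zero hqt.q_ne_zero, hE.cherednik, map_smul,
      Equiv.swap_apply_right, hy]
    simp only [smul_eq_C_mul, C_mul, C_add] at hc' ⊢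
    linear_combination (C (spectralVector qv tv η k.castSucc) * E) * hc'
  · rw [Yop_T_of_ne hT hqt.t_ne_zero hqt.q_ne_zero _ h₁ h₂, hE.cherednik, map_smul,
      Equiv.swap_apply_of_ne_of_ne h₁ h₂, smul_add, smul_comm c]

lemma IsNonsymmMacdonald.exchange (hT : IsDL (N + 1) tv T) (hqt : IsGeneric qv tv)
    (hη : η k.castSucc < η k.succ) (hE : IsNonsymmMacdonald qv tv T η E) :
    IsNonsymmMacdonald qv tv T (η ∘ adj k) (exchange qv tv T k η E) where
  cherednik := hE.cherednik_exchange hT hqt hη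
  support ν hν := by
    rw [MacdonaldEvaluation.exchange, map_smul, map_add, map_smul] at hν
    by_cases h : coeffAt ν E = 0
    · rw [h, smul_zero, add_zero] at hν
      exact hE.support_T hT hη.le (right_ne_zero_of_smul hν)
    · exact (hE.support ν h).comp_adj_right hη.le
  coeffAt_self := by
    have hzero : coeffAt (η ∘ adj k) E = 0 :=
      of_not_not fun h => not_staircaseLE_comp_adj hη (hE.support _ h)
    have hmem : E ∈ sqFiltration (N + 1) (sqSum (η ∘ adj k)) := mem_sqFiltration.2 fun ν hν =>
      of_not_not fun h => hν.not_ge ((sqSum_comp_perm η _).symm ▸ (hE.support ν h).sqSum_le)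
    have hle : (η ∘ adj k) k.succ ≤ (η ∘ adj k) k.castSucc := by simpa using hη.le
    rw [MacdonaldEvaluation.exchange, map_smul, map_add, map_smul, hzero, smul_zero, add_zero,
      coeffAt_T_of_le hT hle hmem, comp_adj_comp_adj, hE.coeffAt_self, mul_one, smul_eq_mul,
      inv_mul_cancel₀ hqt.t_ne_zero]

lemma principalEval_exchange (hT : IsDL (N + 1) tv T) (hqt : IsGeneric qv tv)
    (hη : η k.castSucc < η k.succ) (E : P (N + 1)) :
    (1 - spectralRatio qv tv k η) * (tv * principalEval tv (exchange qv tv T k η E)) =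
      (1 - tv * spectralRatio qv tv k η) * principalEval tv E := by
  have hr := hqt.one_sub_spectralRatio_ne_zero hη
  rw [exchange, map_smul, map_add, map_smul, principalEval_T hT hqt.t_ne_zero hqt.t_ne_one,
    smul_eq_mul, smul_eq_mul, mul_inv_cancel_left₀ hqt.t_ne_zero]
  field_simp
  ring

end Exchange

/-- The evaluation formula for the nonsymmetric Macdonald polynomial `E` of `η`. -/
def EvaluationFormula (qv tv : K) (η : Fin (N + 1) → ℕ) (E : P (N + 1)) : Prop :=
  principalEval tv E * hookProd qv tv η = tv ^ lTot (N + 1) η * boxProd qv tv η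

lemma evaluationFormula_zero : EvaluationFormula qv tv (0 : Fin (N + 1) → ℕ) 1 := by
  simp [EvaluationFormula, hookProd, boxProd, lTot]

lemma IsNonsymmMacdonald.evaluationFormula_raise (hT : IsDL (N + 1) tv T)
    (hqt : IsGeneric qv tv) {η : Fin (N + 1) → ℕ} {E : P (N + 1)}
    (hE : IsNonsymmMacdonald qv tv T η E) (h : EvaluationFormula qv tv η E) :
    EvaluationFormula qv tv (MacdonaldEvaluation.raise η)
      ((qv ^ η 0)⁻¹ • (X (Fin.last N) * rotation N qv E)) := by
  rw [EvaluationFormula] at h ⊢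
  rw [hE.principalEval_raise hT hqt, hookProd_raise, boxProd_raise, lTot_raise, pow_add]
  linear_combination tv ^ leg (N + 1) η 0 0 *
    (1 - qv ^ (η 0 + 1) * tv ^ (leg (N + 1) η 0 0 + 1)) * h

lemma EvaluationFormula.exchange (hT : IsDL (N + 1) tv T) (hqt : IsGeneric qv tv) {k : Fin N}
    {η : Fin (N + 1) → ℕ} (hη : η k.castSucc < η k.succ) {E : P (N + 1)}
    (h : EvaluationFormula qv tv η E) :
    EvaluationFormula qv tv (η ∘ adj k) (exchange qv tv T k η E) := by
  have hev := principalEval_exchange hT hqt hη E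
  have hhook := hookProd_comp_adj (qv := qv) (tv := tv) hη
  rw [pow_succ, ← mul_assoc, ← spectralRatio] at hhook
  rw [EvaluationFormula, lTot_comp_adj hη, pow_succ] at h
  rw [EvaluationFormula, boxProd_comp_adj hη]
  refine mul_left_cancel₀ (hqt.one_sub_spectralRatio_ne_zero hη)
    (mul_left_cancel₀ hqt.t_ne_zero ?_)
  linear_combination hookProd qv tv (η ∘ adj k) * hev + principalEval tv E * hhook +
    (1 - spectralRatio qv tv k η) * h

/-- Compositions are built from `0` by raising, which needs a nonzero last row; exchanges move a
nonzero row to the end. -/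
theorem exists_isNonsymmMacdonald (hT : IsDL (N + 1) tv T) (hqt : IsGeneric qv tv)
    (η : Fin (N + 1) → ℕ) :
    ∃ E, IsNonsymmMacdonald qv tv T η E ∧ EvaluationFormula qv tv η E := by
  induction hd : ∑ i, η i generalizing η with
  | zero =>
    obtain rfl : η = 0 := funext fun i => (sum_eq_zero_iff.1 hd) i (mem_univ i)
    exact ⟨1, isNonsymmMacdonald_zero hT hqt.t_ne_zero, evaluationFormula_zero⟩
  | succ d ih =>
    suffices h : ∀ p (η : Fin (N + 1) → ℕ), ∑ i, η i = d + 1 → η p ≠ 0 →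
        ∃ E, IsNonsymmMacdonald qv tv T η E ∧ EvaluationFormula qv tv η E by
      obtain ⟨p, -, hp⟩ := exists_ne_zero_of_sum_ne_zero (hd.trans_ne d.succ_ne_zero)
      exact h p η hd hp
    intro p
    induction p using Fin.reverseInduction with
    | last =>
      intro η hη hp
      obtain ⟨μ, rfl⟩ := exists_eq_raise hp
      have hμ : ∑ i, μ i = d := by
        simp only [Fin.sum_univ_castSucc, raise_castSucc, raise_last] at hη
        rw [Fin.sum_univ_succ]
        lia
      obtain ⟨E, hE, hev⟩ := ih μ hμ
      exact ⟨_, hE.raise hT hqt, hE.evaluationFormula_raise hT hqt hev⟩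
    | cast k ihk =>
      intro η hη hp
      rcases lt_or_ge (η k.succ) (η k.castSucc) with hlt | hle
      · obtain ⟨E, hE, hev⟩ := ihk (η ∘ adj k) ((Equiv.sum_comp (adj k) η).trans hη)
          (by simpa using hp)
        have hlt' : (η ∘ adj k) k.castSucc < (η ∘ adj k) k.succ := by simpa using hlt
        exact comp_adj_comp_adj k η ▸ ⟨_, hE.exchange hT hqt hlt', hev.exchange hT hqt hlt'⟩
      · exact ihk η hη (Nat.pos_of_ne_zero hp |>.trans_le hle).ne'

end NonsymmetricMacdonald

section Symmetrizer

open HeckeRelations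

variable {N : ℕ} {qv tv : K} {T : ℕ → P (N + 1) →ₗ[K] P (N + 1)}

/-- The symmetrizer of the Hecke algebra generated by `T 0`, …, `T (m - 1)`, for `m ≤ N`. -/
noncomputable def heckeSymmetrizer (hT : IsDL (N + 1) tv T) (h₀ : tv ≠ 0) (m : ℕ) :
    Module.End K (P (N + 1)) :=
  symmetrizer (unitT hT h₀) m

lemma heckeSymmetrizer_succ_apply (hT : IsDL (N + 1) tv T) (h₀ : tv ≠ 0) (m : Fin N)
    (f : P (N + 1)) :
    heckeSymmetrizer hT h₀ (m + 1) f =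
      ∑ j ∈ Iic m.succ, ascProd (M := Module.End K (P (N + 1))) T j (m.succ - j)
        (heckeSymmetrizer hT h₀ m f) := by
  have hasc : ∀ j ∈ range ((m : ℕ) + 1 + 1),
      ascProd (fun k => (unitT hT h₀ k : Module.End K (P (N + 1)))) j (m + 1 - j) =
        ascProd (M := Module.End K (P (N + 1))) T j (m + 1 - j) := fun j hj => by
    refine congrArg List.prod (List.map_congr_left fun k hk => ?_)
    rw [List.mem_range'_1] at hk
    exact coe_unitT hT h₀ (by rw [mem_range] at hj; lia)
  rw [heckeSymmetrizer, symmetrizer, cosetSum, sum_congr rfl hasc, Module.End.mul_apply,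
    LinearMap.sum_apply, Nat.range_succ_eq_Iic, ← Fin.val_succ, ← Fin.map_valEmbedding_Iic, sum_map]
  rfl

lemma Iic_fin_zero : Iic (0 : Fin (N + 1)) = {0} :=
  Iic_bot

lemma prod_Iic_succ (m : Fin N) (f : Fin (N + 1) → K) :
    ∏ a ∈ Iic m.succ, f a = f m.succ * ∏ a ∈ Iic m.castSucc, f a := by
  rw [← mul_prod_Iio_eq_prod_Iic]
  congr 2

/-- The permutation reversing the first `m + 1` positions. -/
def revIic (m : Fin (N + 1)) : Equiv.Perm (Fin (N + 1)) :=
  Function.Involutive.toPerm (fun p => if p ≤ m then ⟨m - p, by lia⟩ else p) fun p => by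
    rcases le_or_gt p m with h | h
    · simp only [h, if_true, Fin.le_def, Nat.sub_le, Fin.ext_iff]
      have := Fin.le_def.1 h
      lia
    · simp only [h.not_ge, if_false]

lemma val_revIic {m p : Fin (N + 1)} (h : p ≤ m) : (revIic m p : ℕ) = m - p :=
  congrArg Fin.val (if_pos h)

lemma revIic_of_lt {m p : Fin (N + 1)} (h : m < p) : revIic m p = p :=
  if_neg h.not_ge

lemma sum_Iic_revIic (m : Fin (N + 1)) (f : Fin (N + 1) → K) :
    ∑ j ∈ Iic m, f (revIic m j) = ∑ j ∈ Iic m, f j := by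
  refine sum_equiv (revIic m) (fun j => ?_) fun j _ => rfl
  rcases le_or_gt j m with h | h
  · simp only [mem_Iic, h, Fin.le_def, val_revIic h, Nat.sub_le]
  · rw [revIic_of_lt h]

lemma principalEval_heckeSymmetrizer (hT : IsDL (N + 1) tv T) (h₀ : tv ≠ 0) (h₁ : tv ≠ 1)
    (m : Fin (N + 1)) (f : P (N + 1)) :
    principalEval tv (heckeSymmetrizer hT h₀ m f) =
      (∏ a ∈ Iic m, ∑ j ∈ Iic a, tv ^ (j : ℕ)) * principalEval tv f := by
  induction m using Fin.induction with
  | zero => simp [heckeSymmetrizer, symmetrizer, Iic_fin_zero]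
  | succ m ih =>
    have hasc : ∀ j ∈ Iic m.succ, principalEval tv (ascProd (M := Module.End K (P (N + 1))) T j
        (m.succ - j) (heckeSymmetrizer hT h₀ m f)) =
          tv ^ (revIic m.succ j : ℕ) * principalEval tv (heckeSymmetrizer hT h₀ m f) :=
      fun j hj => by
        have hjm := Fin.le_def.1 (mem_Iic.1 hj)
        rw [principalEval_ascProd_T hT h₀ h₁ (by lia), val_revIic hjm]
    rw [Fin.val_succ, heckeSymmetrizer_succ_apply, map_sum, sum_congr rfl hasc, ← sum_mul,
      sum_Iic_revIic m.succ (fun j => tv ^ (j : ℕ)), ← Fin.val_castSucc, ih, prod_Iic_succ,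
      mul_assoc]

lemma heckeSymmetrizer_mem_sqFiltration (hT : IsDL (N + 1) tv T) (h₀ : tv ≠ 0)
    (m : Fin (N + 1)) {B : ℕ} {f : P (N + 1)} (hf : f ∈ sqFiltration (N + 1) B) :
    heckeSymmetrizer hT h₀ m f ∈ sqFiltration (N + 1) B := by
  induction m using Fin.induction with
  | zero => exact hf
  | succ m ih =>
    rw [Fin.val_succ, heckeSymmetrizer_succ_apply]
    refine sum_mem fun j hj => ascProd_T_mem_sqFiltration hT ?_ ih
    have := Fin.le_def.1 (mem_Iic.1 hj)
    lia

lemma coeffAt_heckeSymmetrizer_succ (hT : IsDL (N + 1) tv T) (h₀ : tv ≠ 0) {m : Fin N}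
    {ν : Fin (N + 1) → ℕ} (hν : AntitoneOn ν (Set.Iic m.succ)) {f : P (N + 1)}
    (hf : f ∈ sqFiltration (N + 1) (sqSum ν)) :
    coeffAt ν (heckeSymmetrizer hT h₀ (m + 1) f) =
      ∑ j ∈ Iic m.succ, tv ^ (m.succ - j : ℕ) *
        coeffAt (ν ∘ Fin.cycleIcc j m.succ) (heckeSymmetrizer hT h₀ m f) := by
  rw [heckeSymmetrizer_succ_apply, map_sum]
  refine sum_congr rfl fun j hj => ?_
  rw [mem_Iic] at hj
  exact coeffAt_ascProd_T (ν := ν) hT hj (fun i hji him => hν (Set.mem_Iic.2 hj) him hji.le)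
    (heckeSymmetrizer_mem_sqFiltration hT h₀ m.castSucc hf)

lemma strictMonoOn_cycleIcc {j : Fin (N + 1)} {m : Fin N} (hj : j ≤ m.succ) :
    StrictMonoOn (Fin.cycleIcc j m.succ) (Set.Iic m.castSucc) := by
  have h (a : Fin (N + 1)) (ha : a ≤ m.castSucc) :
      ∃ b : Fin N, b.castSucc = a ∧ Fin.cycleIcc j m.succ a = j.succAbove b := by
    obtain ⟨b, rfl⟩ := Fin.exists_castSucc_eq.2 (ha.trans_lt m.castSucc_lt_last).ne
    refine ⟨b, rfl, ?_⟩
    rw [← Fin.cycleIcc_comp_succAbove j m.succ hj, Function.comp_apply,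
      Fin.succAbove_of_castSucc_lt _ _
        (Fin.castSucc_lt_succ_iff.2 (Fin.castSucc_le_castSucc_iff.1 ha))]
  intro a ha a' ha' hlt
  obtain ⟨b, rfl, hb⟩ := h a ha
  obtain ⟨b', rfl, hb'⟩ := h a' ha'
  rw [hb, hb']
  exact Fin.strictMono_succAbove j (Fin.castSucc_lt_castSucc_iff.1 hlt)

lemma antitoneOn_comp_cycleIcc {j : Fin (N + 1)} {m : Fin N} {ν : Fin (N + 1) → ℕ}
    (hν : AntitoneOn ν (Set.Iic m.succ)) (hj : j ≤ m.succ) :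
    AntitoneOn (ν ∘ Fin.cycleIcc j m.succ) (Set.Iic m.castSucc) :=
  hν.comp_MonotoneOn (strictMonoOn_cycleIcc hj).monotoneOn fun a ha => by
    by_contra h
    have hfix := Fin.cycleIcc_of_gt (i := j) (not_le.1 h)
    rw [(Fin.cycleIcc j m.succ).injective hfix] at h
    exact h (Set.mem_Iic.2 (le_trans ha m.castSucc_lt_succ.le))

lemma coeffAt_heckeSymmetrizer_eq_zero (hT : IsDL (N + 1) tv T) (h₀ : tv ≠ 0)
    {ζ : Fin (N + 1) → ℕ} {f : P (N + 1)} (hf : f ∈ sqFiltration (N + 1) (sqSum ζ))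
    (hζ : ∀ σ : Equiv.Perm (Fin (N + 1)), coeffAt (ζ ∘ σ) f ≠ 0 → ζ ∘ σ = ζ) {m : Fin (N + 1)}
    {σ : Equiv.Perm (Fin (N + 1))} (hσ : AntitoneOn (ζ ∘ σ) (Set.Iic m)) {p : Fin (N + 1)}
    (hmp : m < p) (hp : ζ (σ p) ≠ ζ p) : coeffAt (ζ ∘ σ) (heckeSymmetrizer hT h₀ m f) = 0 := by
  induction m using Fin.induction generalizing σ with
  | zero =>
    by_contra h
    exact hp (congrFun (hζ σ h) p)
  | succ m ih =>
    rw [Fin.val_succ, coeffAt_heckeSymmetrizer_succ hT h₀ hσ (by rwa [sqSum_comp_perm])]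
    refine sum_eq_zero fun j hj => mul_eq_zero_of_right _ ?_
    rw [Function.comp_assoc, ← Equiv.Perm.coe_mul]
    refine ih (antitoneOn_comp_cycleIcc hσ (mem_Iic.1 hj)) (m.castSucc_lt_succ.trans hmp) ?_
    · rwa [Equiv.Perm.mul_apply, Fin.cycleIcc_of_gt hmp]

lemma revIic_last : revIic (Fin.last N) = Fin.revPerm := by
  ext p
  rw [val_revIic p.le_last, Fin.revPerm_apply, Fin.val_rev, Fin.val_last]
  lia

lemma revIic_mul_cycleIcc (m : Fin N) :
    revIic m.succ * Fin.cycleIcc 0 m.succ = revIic m.castSucc := by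
  ext p : 1
  rw [Equiv.Perm.mul_apply]
  rcases lt_trichotomy p m.succ with h | rfl | h
  · have h' := Fin.le_castSucc_iff.2 h
    have hp : ((p + 1 : Fin (N + 1)) : ℕ) = p + 1 :=
      Fin.val_add_one_of_lt (h.trans_le m.succ.le_last)
    have hp' : p + 1 ≤ m.succ := by
      rw [Fin.le_def, hp]
      exact h
    rw [Fin.cycleIcc_of_ge_of_lt p.zero_le h, Fin.ext_iff, val_revIic h', val_revIic hp', hp,
      Fin.val_succ, Nat.add_sub_add_right, Fin.val_castSucc]
  · rw [Fin.cycleIcc_of_last m.succ.zero_le, revIic_of_lt m.castSucc_lt_succ, Fin.ext_iff,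
      val_revIic m.succ.zero_le, Fin.val_zero, tsub_zero]
  · rw [Fin.cycleIcc_of_gt h, revIic_of_lt h, revIic_of_lt (m.castSucc_lt_succ.trans h)]

lemma comp_cycleIcc_eq_comp_cycleIcc_zero {ν : Fin (N + 1) → ℕ} {j m : Fin (N + 1)} (hjm : j ≤ m)
    (hν : AntitoneOn ν (Set.Iic m)) (hj : ν j = ν 0) :
    ν ∘ Fin.cycleIcc j m = ν ∘ Fin.cycleIcc 0 m := by
  funext p
  rw [Function.comp_apply, Function.comp_apply]
  rcases lt_trichotomy p m with h | rfl | h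
  · rcases le_or_gt j p with hjp | hjp
    · rw [Fin.cycleIcc_of_ge_of_lt hjp h, Fin.cycleIcc_of_ge_of_lt p.zero_le h]
    · have hconst {i : Fin (N + 1)} (hij : i ≤ j) : ν i = ν 0 :=
        (hν (Fin.zero_le m) (hij.trans hjm) i.zero_le).antisymm
          (hj.symm.trans_le (hν (hij.trans hjm) hjm hij))
      rw [Fin.cycleIcc_of_lt hjp, Fin.cycleIcc_of_ge_of_lt p.zero_le h, hconst hjp.le,
        hconst (Fin.add_one_le_of_lt hjp)]
  · rw [Fin.cycleIcc_of_last hjm, Fin.cycleIcc_of_last p.zero_le, hj]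
  · rw [Fin.cycleIcc_of_gt h, Fin.cycleIcc_of_gt h]

lemma antitoneOn_comp_revIic {ζ : Fin (N + 1) → ℕ} (hζ : Monotone ζ) (m : Fin (N + 1)) :
    AntitoneOn (ζ ∘ revIic m) (Set.Iic m) := fun i hi j hj hij =>
  hζ (by rw [Fin.le_def, val_revIic hi, val_revIic hj]; exact Nat.sub_le_sub_left hij _)

lemma coeffAt_comp_cycleIcc_heckeSymmetrizer (hT : IsDL (N + 1) tv T) (h₀ : tv ≠ 0)
    {ζ : Fin (N + 1) → ℕ} (hmono : Monotone ζ) {f : P (N + 1)}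
    (hf : f ∈ sqFiltration (N + 1) (sqSum ζ))
    (hζ : ∀ σ : Equiv.Perm (Fin (N + 1)), coeffAt (ζ ∘ σ) f ≠ 0 → ζ ∘ σ = ζ) {m : Fin N}
    {j : Fin (N + 1)} (hj : j ≤ m.succ) :
    coeffAt ((ζ ∘ revIic m.succ) ∘ Fin.cycleIcc j m.succ) (heckeSymmetrizer hT h₀ m f) =
      if ζ (revIic m.succ j) = ζ m.succ then
        coeffAt (ζ ∘ revIic m.castSucc) (heckeSymmetrizer hT h₀ m f) else 0 := by
  have hanti := antitoneOn_comp_revIic hmono m.succ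
  split_ifs with h
  · have h' : (ζ ∘ revIic m.succ) j = (ζ ∘ revIic m.succ) 0 :=
      h.trans (congrArg ζ (Fin.ext (val_revIic m.succ.zero_le).symm))
    rw [comp_cycleIcc_eq_comp_cycleIcc_zero hj hanti h', Function.comp_assoc,
      ← Equiv.Perm.coe_mul, revIic_mul_cycleIcc]
  · rw [Function.comp_assoc, ← Equiv.Perm.coe_mul]
    refine coeffAt_heckeSymmetrizer_eq_zero hT h₀ hf hζ (m := m.castSucc)
      (antitoneOn_comp_cycleIcc hanti hj) m.castSucc_lt_succ ?_
    rwa [Equiv.Perm.mul_apply, Fin.cycleIcc_of_last hj]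

lemma coeffAt_comp_revIic_heckeSymmetrizer (hT : IsDL (N + 1) tv T) (h₀ : tv ≠ 0)
    {ζ : Fin (N + 1) → ℕ} (hmono : Monotone ζ) {f : P (N + 1)}
    (hf : f ∈ sqFiltration (N + 1) (sqSum ζ))
    (hζ : ∀ σ : Equiv.Perm (Fin (N + 1)), coeffAt (ζ ∘ σ) f ≠ 0 → ζ ∘ σ = ζ) (m : Fin (N + 1)) :
    coeffAt (ζ ∘ revIic m) (heckeSymmetrizer hT h₀ m f) =
      (∏ a ∈ Iic m, ∑ j ∈ Iic a with ζ j = ζ a, tv ^ (j : ℕ)) * coeffAt ζ f := by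
  induction m using Fin.induction with
  | zero =>
    have hrev : ζ ∘ revIic 0 = ζ := funext fun p => by
      rcases p.zero_le.eq_or_lt with rfl | hp
      · exact congrArg ζ (Fin.ext (val_revIic le_rfl))
      · exact congrArg ζ (revIic_of_lt hp)
    simp [heckeSymmetrizer, symmetrizer, Iic_fin_zero, hrev, filter_singleton]
  | succ m ih =>
    rw [Fin.val_succ, coeffAt_heckeSymmetrizer_succ hT h₀ (antitoneOn_comp_revIic hmono m.succ)
      (by rwa [sqSum_comp_perm]), prod_Iic_succ, mul_assoc, ← ih, sum_filter,
      ← sum_Iic_revIic m.succ fun j => if ζ j = ζ m.succ then tv ^ (j : ℕ) else 0, sum_mul]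
    refine sum_congr rfl fun j hj => ?_
    rw [mem_Iic] at hj
    rw [coeffAt_comp_cycleIcc_heckeSymmetrizer hT h₀ hmono hf hζ hj, val_revIic hj, mul_ite,
      mul_zero, ite_mul, zero_mul]
    rfl

end Symmetrizer

section SymmetricEigenfunctions

open HeckeRelations

variable {N : ℕ} {qv tv : K} {T : ℕ → P (N + 1) →ₗ[K] P (N + 1)}

lemma isSymmetric_of_T_eq_smul (hT : IsDL (N + 1) tv T) {f : P (N + 1)}
    (hf : ∀ k : Fin N, T k f = tv • f) : f.IsSymmetric := by
  have hadj (k : Fin N) : rename (adj k) f = f := by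
    have hne : (C tv * X k.castSucc - X k.succ : P (N + 1)) ≠ 0 := fun h => by
      simpa [k.castSucc_lt_succ.ne] using
        congrArg (aeval fun i : Fin (N + 1) => if i = k.succ then (1 : K) else 0) h
    have h := X_sub_X_mul_T hT k f
    rw [hf, smul_eq_C_mul] at h
    exact mul_left_cancel₀ hne (by linear_combination -h)
  intro σ
  have hσ : σ ∈ Submonoid.closure (Set.range fun k : Fin N => adj k) := by
    rw [Equiv.Perm.mclosure_swap_castSucc_succ]
    trivial
  induction hσ using Submonoid.closure_induction with
  | mem σ hσ =>
    obtain ⟨k, rfl⟩ := hσ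
    exact hadj k
  | one => exact rename_id_apply f
  | mul σ ρ _ _ hσ hρ => rw [Equiv.Perm.coe_mul, ← rename_rename, hρ, hσ]

lemma isSymmetric_heckeSymmetrizer (hT : IsDL (N + 1) tv T) (h₀ : tv ≠ 0) (f : P (N + 1)) :
    (heckeSymmetrizer hT h₀ N f).IsSymmetric :=
  isSymmetric_of_T_eq_smul hT fun k => by
    have h := (heckeRelations_unitT hT h₀ one_ne_zero).T_mul_symmetrizer le_rfl k.is_lt
    rw [coe_unitT hT h₀ k.is_lt] at h
    exact LinearMap.congr_fun h f

lemma sum_Yop_heckeSymmetrizer (hT : IsDL (N + 1) tv T) (h₀ : tv ≠ 0) (hq : qv ≠ 0)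
    (f : P (N + 1)) :
    (∑ i, Yop (N + 1) qv tv T i) (heckeSymmetrizer hT h₀ N f) =
      heckeSymmetrizer hT h₀ N ((∑ i, Yop (N + 1) qv tv T i) f) := by
  have h : Commute (∑ i ∈ range (N + 1), cherednik N tv (unitT hT h₀)
      (rotation N qv).toLinearMap i) (heckeSymmetrizer hT h₀ N) :=
    commute_symmetrizer fun k hk =>
      (heckeRelations_unitT hT h₀ hq).commute_T_sum_cherednik h₀ hk
  rw [← Fin.sum_univ_eq_sum_range, ← sum_congr rfl fun i _ => Yop_eq_cherednik hT h₀ i] at h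
  exact LinearMap.congr_fun h.eq f

lemma coeffAt_comp_perm {f : P (N + 1)} (hf : f.IsSymmetric) (ν : Fin (N + 1) → ℕ)
    (σ : Equiv.Perm (Fin (N + 1))) : coeffAt (ν ∘ σ) f = coeffAt ν f := by
  rw [← coeffAt_rename, hf σ]

/-- The eigenvalue of the sum of the Cherednik operators on the symmetric Macdonald polynomial of
the partition `μ`. -/
noncomputable def symmEigenvalue (qv tv : K) (μ : Fin (N + 1) → ℕ) : K :=
  ∑ i : Fin (N + 1), qv ^ μ i * (tv ^ (i : ℕ))⁻¹

lemma coeffAt_Yop_of_isSymmetric (hT : IsDL (N + 1) tv T) (h₀ : tv ≠ 0) {f : P (N + 1)}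
    (hf : f.IsSymmetric) {μ : Fin (N + 1) → ℕ} (hμ : Antitone μ)
    (hfμ : f ∈ sqFiltration (N + 1) (sqSum μ)) (i : Fin (N + 1)) :
    coeffAt μ (Yop (N + 1) qv tv T i f) = qv ^ μ i * (tv ^ (i : ℕ))⁻¹ * coeffAt μ f := by
  have hTf (k : Fin N) : T k f = tv • f := by
    rw [T_of_rename_eq hT (hf _), smul_eq_C_mul]
  have hpow : (tv ^ N)⁻¹ * tv ^ (N - i : ℕ) = (tv ^ (i : ℕ))⁻¹ := by
    rw [← pow_sub_mul_pow tv (Nat.le_of_lt_succ i.is_lt), mul_inv_rev,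
      inv_mul_cancel_right₀ (pow_ne_zero _ h₀)]
  have hascProd := coeffAt_ascProd_T hT i.le_last (fun j hj _ => hμ hj.le)
    (rotation_mem_sqFiltration (qv := qv) hfμ)
  rw [Fin.val_last] at hascProd
  rw [Yop_apply_of_T_eq_smul h₀ hTf, map_smul, hascProd,
    coeffAt_rotation, Function.comp_apply, Fin.cycleIcc_of_last i.le_last, coeffAt_comp_perm hf,
    coeffAt_comp_perm hf, smul_eq_mul, ← hpow]
  ring

lemma exists_antitone_comp_perm (ν : Fin (N + 1) → ℕ) :
    ∃ σ : Equiv.Perm (Fin (N + 1)), Antitone (ν ∘ σ) :=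
  ⟨Tuple.sort ν * Fin.revPerm, fun _ _ h => Tuple.monotone_sort ν (Fin.rev_le_rev.2 h)⟩

lemma eq_zero_of_sum_Yop_eq_smul (hT : IsDL (N + 1) tv T) (h₀ : tv ≠ 0) {κ : Fin (N + 1) → ℕ}
    (hκ : ∀ μ, symmEigenvalue qv tv μ = symmEigenvalue qv tv κ → μ = κ) {f : P (N + 1)}
    (hf : f.IsSymmetric)
    (hY : (∑ i, Yop (N + 1) qv tv T i) f = symmEigenvalue qv tv κ • f)
    (hfκ : coeffAt κ f = 0) : f = 0 := by
  by_contra hne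
  obtain ⟨ν, hν, hmax⟩ := f.support.exists_max_image (fun ν => sqSum ν)
    (nonempty_iff_ne_empty.2 fun h => hne (support_eq_empty.1 h))
  obtain ⟨σ, hσ⟩ := exists_antitone_comp_perm ν
  have hfσ : f ∈ sqFiltration (N + 1) (sqSum (ν ∘ σ)) := mem_sqFiltration.2 fun μ hμ => by
    by_contra h
    rw [sqSum_comp_perm] at hμ
    exact hμ.not_ge (hmax (Finsupp.equivFunOnFinite.symm μ) (mem_support_iff.2 h))
  have hcoeff : coeffAt (ν ∘ σ) f ≠ 0 := by
    rw [coeffAt_comp_perm hf, coeffAt, Finsupp.equivFunOnFinite_symm_coe]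
    exact mem_support_iff.1 hν
  have heigen : symmEigenvalue qv tv (ν ∘ σ) = symmEigenvalue qv tv κ := by
    have h := congrArg (coeffAt (ν ∘ σ)) hY
    rw [LinearMap.sum_apply, map_sum, map_smul, smul_eq_mul,
      sum_congr rfl fun i _ => coeffAt_Yop_of_isSymmetric hT h₀ hf hσ hfσ i, ← sum_mul] at h
    exact mul_right_cancel₀ hcoeff h
  exact hcoeff (hκ _ heigen ▸ hfκ)

lemma coeffAt_smul_eq_coeffAt_smul (hT : IsDL (N + 1) tv T) (h₀ : tv ≠ 0) {κ : Fin (N + 1) → ℕ}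
    (hκ : ∀ μ, symmEigenvalue qv tv μ = symmEigenvalue qv tv κ → μ = κ) {f g : P (N + 1)}
    (hf : f.IsSymmetric) (hg : g.IsSymmetric)
    (hYf : (∑ i, Yop (N + 1) qv tv T i) f = symmEigenvalue qv tv κ • f)
    (hYg : (∑ i, Yop (N + 1) qv tv T i) g = symmEigenvalue qv tv κ • g) :
    coeffAt κ f • g = coeffAt κ g • f := by
  refine sub_eq_zero.1 (eq_zero_of_sum_Yop_eq_smul hT h₀ hκ ((hg.smul _).sub (hf.smul _)) ?_ ?_)
  · rw [LinearMap.map_sub, map_smul, map_smul, hYf, hYg, smul_sub, smul_comm,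
      smul_comm (coeffAt κ g)]
  · rw [LinearMap.map_sub, map_smul, map_smul, smul_eq_mul, smul_eq_mul, mul_comm, sub_self]

end SymmetricEigenfunctions

section TwoParameters

variable {N : ℕ}

lemma isGeneric_q_t : IsGeneric q t where
  q_ne_zero := (FaithfulSMul.algebraMap_eq_zero_iff _ _).not.2 (X_ne_zero _)
  t_ne_zero := (FaithfulSMul.algebraMap_eq_zero_iff _ _).not.2 (X_ne_zero _)
  pow_mul_pow_ne_one a b hab h := by
    rw [q, t, ← map_pow, ← map_pow, ← map_mul,
      ← map_one (algebraMap (MvPolynomial (Fin 2) ℚ) K)] at h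
    have h2 := congrArg (eval fun _ => (2 : ℚ)) (IsFractionRing.injective _ K h)
    simp only [map_one, map_mul, map_pow, eval_X, ← pow_add] at h2
    exact (one_lt_pow₀ one_lt_two hab).ne' h2

lemma t_pow_mul_symmEigenvalue (μ : Fin (N + 1) → ℕ) :
    t ^ N * symmEigenvalue q t μ = algebraMap (MvPolynomial (Fin 2) ℚ) K
      (∑ i : Fin (N + 1), monomial (Finsupp.single 0 (μ i) + Finsupp.single 1 (N - i : ℕ)) 1) := by
  rw [symmEigenvalue, mul_sum, map_sum]
  refine sum_congr rfl fun i _ => ?_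
  have hmon : (monomial (Finsupp.single 0 (μ i) + Finsupp.single 1 (N - i : ℕ)) 1 :
      MvPolynomial (Fin 2) ℚ) = X 0 ^ μ i * X 1 ^ (N - i : ℕ) := by
    rw [X_pow_eq_monomial, X_pow_eq_monomial, monomial_mul, one_mul]
  rw [hmon, map_mul, map_pow, map_pow, ← q, ← t,
    ← pow_sub_mul_pow t (Nat.le_of_lt_succ i.is_lt), mul_left_comm,
    mul_inv_cancel_right₀ (pow_ne_zero _ isGeneric_q_t.t_ne_zero)]

lemma symmEigenvalue_q_t_injective :
    Function.Injective (symmEigenvalue (N := N) q t) := fun μ κ h => by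
  have hpoly := congrArg (t ^ N * ·) h
  simp only [t_pow_mul_symmEigenvalue] at hpoly
  have hsum := IsFractionRing.injective (MvPolynomial (Fin 2) ℚ) K hpoly
  funext b
  have hexp (ν : Fin (N + 1) → ℕ) (i : Fin (N + 1)) :
      (Finsupp.single (0 : Fin 2) (ν i) + Finsupp.single 1 (N - i : ℕ) =
        Finsupp.single 0 (μ b) + Finsupp.single 1 (N - b : ℕ)) ↔ i = b ∧ ν b = μ b := by
    refine ⟨fun h => ?_, by rintro ⟨rfl, h⟩; rw [h]⟩
    have h0 := DFunLike.congr_fun h 0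
    have h1 := DFunLike.congr_fun h 1
    simp only [Finsupp.add_apply, Finsupp.single_eq_same, Finsupp.single_apply, one_ne_zero,
      zero_ne_one, if_false, add_zero, zero_add] at h0 h1
    obtain rfl : i = b := by lia
    exact ⟨rfl, h0⟩
  have hcoeff := congrArg (coeff (Finsupp.single 0 (μ b) + Finsupp.single 1 (N - b : ℕ))) hsum
  simp only [coeff_sum, coeff_monomial, hexp, ite_and, sum_ite_eq', mem_univ, if_true] at hcoeff
  by_contra hne
  simp [Ne.symm hne] at hcoeff

end TwoParameters

section Partitions

variable {N : ℕ} {qv tv : K}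

lemma legCo_lt_legCo {η : Fin (N + 1) → ℕ} {i k : Fin (N + 1)} (h : η i < relRow η i k) :
    legCo (N + 1) η k < legCo (N + 1) η i := by
  rw [legCo_eq_sum, legCo_eq_sum, ← card_filter, ← card_filter]
  refine card_lt_card ((ssubset_iff_of_subset (monotone_filter_right _ fun l _ hl => ?_)).2
    ⟨k, (mem_filter_univ k).2 h, fun hk => ?_⟩)
  · simp only [relRow] at h hl ⊢
    split_ifs at h hl ⊢ <;> lia
  · rw [mem_filter_univ] at hk
    simp [relRow] at hk

/-- The permutation `i ↦ l'(i)` of the rows of a composition, which sorts them. -/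
noncomputable def legCoPerm (η : Fin (N + 1) → ℕ) : Equiv.Perm (Fin (N + 1)) :=
  Equiv.ofBijective
    (fun i => ⟨legCo (N + 1) η i, by have := leg_zero_add_legCo η i; lia⟩) <|
    Finite.injective_iff_bijective.1 fun i k h => by
      have hik : legCo (N + 1) η i = legCo (N + 1) η k := Fin.mk.inj h
      have hki := mt (legCo_lt_legCo (η := η)) hik.not_gt
      have hik := mt (legCo_lt_legCo (η := η)) hik.not_lt
      simp only [relRow] at hik hki
      split_ifs at hik hki <;> lia

lemma val_legCoPerm (η : Fin (N + 1) → ℕ) (i : Fin (N + 1)) :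
    (legCoPerm η i : ℕ) = legCo (N + 1) η i := rfl

lemma antitone_comp_legCoPerm_symm (η : Fin (N + 1) → ℕ) :
    Antitone (η ∘ (legCoPerm η).symm) := fun a b hab => by
  by_contra! h
  refine (legCo_lt_legCo (η := η) (i := (legCoPerm η).symm a) (k := (legCoPerm η).symm b)
    (h.trans_le (Nat.le_add_right _ _))).not_ge ?_
  rwa [← val_legCoPerm, ← val_legCoPerm, Equiv.apply_symm_apply, Equiv.apply_symm_apply]

lemma sum_spectralVector (η : Fin (N + 1) → ℕ) :
    ∑ i, spectralVector qv tv η i = symmEigenvalue qv tv (η ∘ (legCoPerm η).symm) := by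
  rw [symmEigenvalue]
  refine Eq.trans ?_ (Equiv.sum_comp (legCoPerm η) _)
  simp only [spectralVector, Function.comp_apply, Equiv.symm_apply_apply, val_legCoPerm]

lemma comp_perm_comp_legCoPerm_symm {κ : Fin (N + 1) → ℕ} (hκ : Antitone κ)
    (σ : Equiv.Perm (Fin (N + 1))) : (κ ∘ σ) ∘ (legCoPerm (κ ∘ σ)).symm = κ :=
  Tuple.unique_antitone (σ := σ * (legCoPerm (κ ∘ σ))⁻¹) (τ := 1)
    (antitone_comp_legCoPerm_symm (κ ∘ σ)) hκ

/-- The length of column `j` of the diagram of `η`, with `j = 0` allowed. -/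
def colLength (η : Fin (N + 1) → ℕ) (j : ℕ) : ℕ := #{k | j ≤ η k}

lemma colLength_zero (η : Fin (N + 1) → ℕ) : colLength η 0 = N + 1 := by simp [colLength]

lemma colLength_le (η : Fin (N + 1) → ℕ) (j : ℕ) : colLength η j ≤ N + 1 :=
  card_finset_fin_le _

lemma colLength_comp_perm (η : Fin (N + 1) → ℕ) (σ : Equiv.Perm (Fin (N + 1))) (j : ℕ) :
    colLength (η ∘ σ) j = colLength η j := by
  rw [colLength, colLength, card_filter, card_filter]
  exact Equiv.sum_comp σ fun k => if j ≤ η k then 1 else 0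

lemma lt_colLength_iff {κ : Fin (N + 1) → ℕ} (hκ : Antitone κ) {i : Fin (N + 1)} {j : ℕ} :
    i < colLength κ j ↔ j ≤ κ i := by
  constructor
  · intro h
    by_contra! hj
    have hsub : ({k | j ≤ κ k} : Finset (Fin (N + 1))) ⊆ Iio i := fun k hk =>
      mem_Iio.2 (lt_of_not_ge fun hik => hj.not_ge ((mem_filter.1 hk).2.trans (hκ hik)))
    exact h.not_ge ((card_le_card hsub).trans_eq (Fin.card_Iio i))
  · intro h
    have hsub : Iic i ⊆ ({k | j ≤ κ k} : Finset (Fin (N + 1))) := fun k hk =>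
      mem_filter.2 ⟨mem_univ k, h.trans (hκ (mem_Iic.1 hk))⟩
    exact (Fin.card_Iic i).symm.trans_le (card_le_card hsub)

lemma legCo_of_antitone {κ : Fin (N + 1) → ℕ} (hκ : Antitone κ) (i : Fin (N + 1)) :
    legCo (N + 1) κ i = i := by
  rw [legCo_eq_sum, ← card_filter, ← Fin.card_Iio i]
  congr 1
  ext k
  rw [mem_filter_univ, mem_Iio]
  rcases lt_or_ge k i with h | h
  · simpa [relRow, h] using Nat.lt_succ_of_le (hκ h.le)
  · simpa [relRow, h.not_gt] using hκ h

lemma leg_of_antitone {κ : Fin (N + 1) → ℕ} (hκ : Antitone κ) {i : Fin (N + 1)} {j : ℕ}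
    (h : j ≤ κ i) : leg (N + 1) κ i j + i + 1 = colLength κ j := by
  have hleg := leg_add_legCo h
  rw [legCo_of_antitone hκ] at hleg
  rw [hleg, colLength, card_filter]
  refine sum_congr rfl fun k _ => if_congr ?_ rfl rfl
  rcases lt_or_ge k i with hk | hk
  · have := hκ hk.le
    simp only [relRow, hk, if_true]
    lia
  · simp [relRow, hk.not_gt]

lemma leg_succ_of_monotone {ζ : Fin (N + 1) → ℕ} (hζ : Monotone ζ) {i : Fin (N + 1)} {j : ℕ}
    (h : j < ζ i) : leg (N + 1) ζ i (j + 1) + legCo (N + 1) ζ i + 1 = colLength ζ j := by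
  rw [leg_add_legCo h, colLength, card_filter]
  refine sum_congr rfl fun k _ => if_congr ?_ rfl rfl
  rcases lt_or_ge k i with hk | hk
  · simp [relRow, hk]
  · have := hζ hk
    simp only [relRow, hk.not_gt, if_false]
    lia

end Partitions

section Evaluation

variable {N : ℕ} {qv tv : K} {κ : Fin (N + 1) → ℕ}

lemma sum_spectralVector_comp_rev (hκ : Antitone κ) :
    ∑ i, spectralVector qv tv (κ ∘ Fin.rev) i = symmEigenvalue qv tv κ := by
  rw [sum_spectralVector]
  exact congrArg _ (comp_perm_comp_legCoPerm_symm hκ Fin.revPerm)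

@[to_additive]
lemma prod_comp_rev_legCo {M : Type*} [CommMonoid M] (hκ : Antitone κ) (f : ℕ → ℕ → M) :
    ∏ i, f ((κ ∘ Fin.rev) i) (legCo (N + 1) (κ ∘ Fin.rev) i) = ∏ i : Fin (N + 1), f (κ i) i := by
  rw [← Equiv.prod_comp (legCoPerm (κ ∘ Fin.rev)) fun i : Fin (N + 1) => f (κ i) i]
  refine prod_congr rfl fun i _ => ?_
  have h := congrFun (comp_perm_comp_legCoPerm_symm hκ Fin.revPerm) (legCoPerm (κ ∘ Fin.rev) i)
  rw [val_legCoPerm, ← h]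
  congr 1
  simp [Fin.revPerm]

lemma leg_comp_rev (hκ : Antitone κ) {i : Fin (N + 1)} {j : ℕ} (h : j < (κ ∘ Fin.rev) i) :
    leg (N + 1) (κ ∘ Fin.rev) i (j + 1) + legCo (N + 1) (κ ∘ Fin.rev) i + 1 = colLength κ j :=
  (leg_succ_of_monotone (hκ.comp Fin.rev_anti) h).trans (colLength_comp_perm κ Fin.revPerm j)

/-- In row `i`, both `hP` and `hookProd` are products of all but one of the factors
`1 - q ^ (κ i - j) * t ^ (colLength κ j - i)` with `0 ≤ j ≤ κ i`. -/
lemma hookProd_comp_rev (hκ : Antitone κ) :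
    hookProd q t (κ ∘ Fin.rev) * ∏ i : Fin (N + 1), (1 - t ^ (colLength κ (κ i) - i)) =
      hP (N + 1) κ * ∏ i : Fin (N + 1), (1 - q ^ κ i * t ^ (N + 1 - i : ℕ)) := by
  have hhook : hookProd q t (κ ∘ Fin.rev) = ∏ i : Fin (N + 1), ∏ j ∈ range (κ i),
      (1 - q ^ (κ i - j) * t ^ (colLength κ j - i)) := by
    rw [← prod_comp_rev_legCo hκ fun m l =>
      ∏ j ∈ range m, (1 - q ^ (m - j) * t ^ (colLength κ j - l)), hookProd]
    refine prod_congr rfl fun i _ => ?_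
    rw [prod_Icc_one_eq_prod_range]
    refine prod_congr rfl fun j hj => ?_
    have hj := mem_range.1 hj
    have := leg_comp_rev hκ hj
    congr 3 <;> lia
  have hhP : hP (N + 1) κ = ∏ i : Fin (N + 1), ∏ j ∈ range (κ i),
      (1 - q ^ (κ i - (j + 1)) * t ^ (colLength κ (j + 1) - i)) := by
    refine prod_congr rfl fun i _ => ?_
    rw [prod_Icc_one_eq_prod_range]
    refine prod_congr rfl fun j hj => ?_
    have := leg_of_antitone hκ (mem_range.1 hj)
    congr 3
    lia
  rw [hhook, hhP, ← prod_mul_distrib, ← prod_mul_distrib]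
  refine prod_congr rfl fun i _ => ?_
  let f (j : ℕ) : K := 1 - q ^ (κ i - j) * t ^ (colLength κ j - i)
  have h := (prod_range_succ f (κ i)).symm.trans (prod_range_succ' f (κ i))
  simpa only [f, Nat.sub_self, pow_zero, one_mul, Nat.sub_zero, colLength_zero] using h

lemma boxProd_comp_rev (hκ : Antitone κ) :
    boxProd q t (κ ∘ Fin.rev) * ∏ i : Fin (N + 1), (1 - t ^ (N + 1 - i : ℕ)) =
      bP (N + 1) κ * ∏ i : Fin (N + 1), (1 - q ^ κ i * t ^ (N + 1 - i : ℕ)) := by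
  rw [boxProd, prod_comp_rev_legCo hκ fun m l => ∏ j ∈ Icc 1 m, (1 - q ^ j * t ^ (N + 1 - l)), bP,
    ← prod_mul_distrib, ← prod_mul_distrib]
  refine prod_congr rfl fun i _ => ?_
  rw [prod_Icc_one_eq_prod_range, prod_Icc_one_eq_prod_range, legCo_of_antitone hκ]
  let f (j : ℕ) : K := 1 - q ^ j * t ^ (N + 1 - i : ℕ)
  have h := (prod_range_succ' f (κ i)).symm.trans (prod_range_succ f (κ i))
  simpa only [f, pow_zero, one_mul, Nat.add_sub_cancel] using h

lemma lTot_comp_rev (hκ : Antitone κ) :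
    lTot (N + 1) (κ ∘ Fin.rev) =
      lTot (N + 1) κ + ∑ i : Fin (N + 1), (N + 1 - colLength κ (κ i)) := by
  have hrev : lTot (N + 1) (κ ∘ Fin.rev) = ∑ i : Fin (N + 1), ∑ j ∈ range (κ i),
      (colLength κ j - (i + 1)) := by
    rw [← sum_comp_rev_legCo hκ fun m l => ∑ j ∈ range m, (colLength κ j - (l + 1)), lTot]
    refine sum_congr rfl fun i _ => ?_
    rw [sum_Icc_one_eq_sum_range]
    refine sum_congr rfl fun j hj => ?_
    have := leg_comp_rev hκ (mem_range.1 hj)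
    lia
  have hlTot : lTot (N + 1) κ = ∑ i : Fin (N + 1), ∑ j ∈ range (κ i),
      (colLength κ (j + 1) - (i + 1)) := by
    refine sum_congr rfl fun i _ => ?_
    rw [sum_Icc_one_eq_sum_range]
    refine sum_congr rfl fun j hj => ?_
    have := leg_of_antitone hκ (mem_range.1 hj)
    lia
  rw [hrev, hlTot, ← sum_add_distrib]
  refine sum_congr rfl fun i _ => ?_
  have h := (sum_range_succ (fun j => colLength κ j - (i + 1)) (κ i)).symm.trans
    (sum_range_succ' (fun j => colLength κ j - (i + 1)) (κ i))
  rw [colLength_zero] at h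
  have := (lt_colLength_iff hκ).2 (le_refl (κ i))
  have := colLength_le κ (κ i)
  lia

lemma one_sub_mul_sum_Iic (a : Fin (N + 1)) :
    (1 - tv) * ∑ j ∈ Iic a, tv ^ (j : ℕ) = 1 - tv ^ (a + 1 : ℕ) := by
  have h := sum_map (Iic a) Fin.valEmbedding fun j => tv ^ j
  rw [Fin.map_valEmbedding_Iic, ← Nat.range_succ_eq_Iic] at h
  rw [← mul_neg_geom_sum, h]
  rfl

lemma one_sub_mul_sum_Iic_filter (hκ : Antitone κ) (a : Fin (N + 1)) :
    (1 - tv) * ∑ j ∈ Iic a with (κ ∘ Fin.rev) j = (κ ∘ Fin.rev) a, tv ^ (j : ℕ) =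
      tv ^ (N + 1 - colLength κ (κ a.rev)) * (1 - tv ^ (colLength κ (κ a.rev) - a.rev : ℕ)) := by
  have hfilter : ({j ∈ Iic a | (κ ∘ Fin.rev) j = (κ ∘ Fin.rev) a} : Finset _).map
      Fin.valEmbedding = Ico (N + 1 - colLength κ (κ a.rev)) (a + 1) := by
    ext j
    simp only [mem_map, mem_filter, mem_Iic, Function.comp_apply, Fin.valEmbedding_apply, mem_Ico]
    have hle := colLength_le κ (κ a.rev)
    constructor
    · rintro ⟨j, ⟨hja, hj⟩, rfl⟩
      have := (lt_colLength_iff hκ).2 hj.ge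
      rw [Fin.val_rev] at this
      have : (j : ℕ) ≤ a := hja
      lia
    · rintro ⟨hj, hja⟩
      lift j to Fin (N + 1) using by lia
      have hja : j ≤ a := Nat.lt_succ_iff.1 hja
      refine ⟨j, ⟨hja, (hκ (Fin.rev_le_rev.2 hja)).antisymm ?_⟩, rfl⟩
      refine (lt_colLength_iff hκ).1 ?_
      rw [Fin.val_rev]
      lia
  have hlt := (lt_colLength_iff hκ).2 (le_refl (κ a.rev))
  have hle := colLength_le κ (κ a.rev)
  have h := sum_map {j ∈ Iic a | (κ ∘ Fin.rev) j = (κ ∘ Fin.rev) a} Fin.valEmbedding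
    fun j => tv ^ j
  rw [hfilter] at h
  simp only [Fin.valEmbedding_apply] at h
  rw [Fin.val_rev] at hlt ⊢
  rw [← h, mul_comm, geom_sum_Ico_mul_neg _ (by lia), mul_sub, mul_one, ← pow_add]
  congr 2
  lia

lemma one_sub_pow_mul_prod_sum_Iic :
    (1 - tv) ^ (N + 1) * ∏ a : Fin (N + 1), ∑ j ∈ Iic a, tv ^ (j : ℕ) =
      ∏ i : Fin (N + 1), (1 - tv ^ (N + 1 - i : ℕ)) := by
  rw [← Fin.prod_const, ← prod_mul_distrib, ← Equiv.prod_comp Fin.revPerm]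
  refine prod_congr rfl fun i _ => ?_
  rw [one_sub_mul_sum_Iic, Fin.revPerm_apply, Fin.val_rev]
  congr 2
  lia

lemma one_sub_pow_mul_prod_sum_Iic_filter (hκ : Antitone κ) :
    (1 - tv) ^ (N + 1) *
        ∏ a, ∑ j ∈ Iic a with (κ ∘ Fin.rev) j = (κ ∘ Fin.rev) a, tv ^ (j : ℕ) =
      tv ^ (∑ i, (N + 1 - colLength κ (κ i))) *
        ∏ i : Fin (N + 1), (1 - tv ^ (colLength κ (κ i) - i)) := by
  rw [← Fin.prod_const, ← prod_mul_distrib, ← prod_pow_eq_pow_sum, ← prod_mul_distrib,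
    ← Equiv.prod_comp Fin.revPerm fun i : Fin (N + 1) =>
      tv ^ (N + 1 - colLength κ (κ i)) * (1 - tv ^ (colLength κ (κ i) - i))]
  exact prod_congr rfl fun a _ => one_sub_mul_sum_Iic_filter hκ a

lemma IsNonsymmMacdonald.mem_sqFiltration {T : ℕ → P (N + 1) →ₗ[K] P (N + 1)}
    {η : Fin (N + 1) → ℕ} {E : P (N + 1)} (hE : IsNonsymmMacdonald qv tv T η E) :
    E ∈ sqFiltration (N + 1) (sqSum η) :=
  MacdonaldEvaluation.mem_sqFiltration.2 fun ν hν => by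
    by_contra h
    exact hν.not_ge (hE.support ν h).sqSum_le

lemma principalEval_heckeSymmetrizer_last {T : ℕ → P (N + 1) →ₗ[K] P (N + 1)}
    (hT : IsDL (N + 1) tv T) (h₀ : tv ≠ 0) (h₁ : tv ≠ 1) (f : P (N + 1)) :
    (1 - tv) ^ (N + 1) * principalEval tv (heckeSymmetrizer hT h₀ N f) =
      (∏ i : Fin (N + 1), (1 - tv ^ (N + 1 - i : ℕ))) * principalEval tv f := by
  have h := principalEval_heckeSymmetrizer hT h₀ h₁ (Fin.last N) f
  rw [Fin.val_last, ← Fin.top_eq_last, Iic_top] at h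
  rw [h, ← mul_assoc, one_sub_pow_mul_prod_sum_Iic]

lemma coeffAt_heckeSymmetrizer_last {T : ℕ → P (N + 1) →ₗ[K] P (N + 1)}
    (hT : IsDL (N + 1) tv T) (h₀ : tv ≠ 0) (hκ : Antitone κ) {E : P (N + 1)}
    (hE : IsNonsymmMacdonald qv tv T (κ ∘ Fin.rev) E) :
    (1 - tv) ^ (N + 1) * coeffAt κ (heckeSymmetrizer hT h₀ N E) =
      tv ^ (∑ i, (N + 1 - colLength κ (κ i))) *
        ∏ i : Fin (N + 1), (1 - tv ^ (colLength κ (κ i) - i)) := by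
  have hmono : Monotone (κ ∘ Fin.rev) := hκ.comp Fin.rev_anti
  have h := coeffAt_comp_revIic_heckeSymmetrizer hT h₀ hmono hE.mem_sqFiltration
    (fun σ hσ => (hE.support _ hσ).comp_perm_eq hmono) (Fin.last N)
  have hrev : (κ ∘ Fin.rev) ∘ Fin.revPerm = κ := funext fun i => congrArg κ i.rev_rev
  rw [revIic_last, hrev, Fin.val_last, ← Fin.top_eq_last, Iic_top, hE.coeffAt_self, mul_one] at h
  rw [h, one_sub_pow_mul_prod_sum_Iic_filter hκ]

lemma sum_Yop_heckeSymmetrizer_of_isNonsymmMacdonald {T : ℕ → P (N + 1) →ₗ[K] P (N + 1)}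
    (hT : IsDL (N + 1) tv T) (h₀ : tv ≠ 0) (hq : qv ≠ 0) (hκ : Antitone κ) {E : P (N + 1)}
    (hE : IsNonsymmMacdonald qv tv T (κ ∘ Fin.rev) E) :
    (∑ i, Yop (N + 1) qv tv T i) (heckeSymmetrizer hT h₀ N E) =
      symmEigenvalue qv tv κ • heckeSymmetrizer hT h₀ N E := by
  rw [sum_Yop_heckeSymmetrizer hT h₀ hq, LinearMap.sum_apply, sum_congr rfl fun i _ =>
    hE.cherednik i, ← sum_smul, sum_spectralVector_comp_rev hκ, map_smul]

lemma mul_principalEval_of_isNonsymmMacdonald {T : ℕ → P (N + 1) →ₗ[K] P (N + 1)}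
    (hT : IsDL (N + 1) tv T) (h₀ : tv ≠ 0) (h₁ : tv ≠ 1) (hq : qv ≠ 0) (hκ : Antitone κ)
    (hinj : ∀ μ, symmEigenvalue qv tv μ = symmEigenvalue qv tv κ → μ = κ) {f E : P (N + 1)}
    (hf : f.IsSymmetric) (hYf : (∑ i, Yop (N + 1) qv tv T i) f = symmEigenvalue qv tv κ • f)
    (hE : IsNonsymmMacdonald qv tv T (κ ∘ Fin.rev) E) :
    tv ^ (∑ i, (N + 1 - colLength κ (κ i))) *
        (∏ i : Fin (N + 1), (1 - tv ^ (colLength κ (κ i) - i))) * principalEval tv f =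
      coeffAt κ f * ((∏ i : Fin (N + 1), (1 - tv ^ (N + 1 - i : ℕ))) * principalEval tv E) := by
  have hprop := congrArg (principalEval tv) (coeffAt_smul_eq_coeffAt_smul hT h₀ hinj hf
    (isSymmetric_heckeSymmetrizer hT h₀ E) hYf
    (sum_Yop_heckeSymmetrizer_of_isNonsymmMacdonald hT h₀ hq hκ hE))
  rw [map_smul, map_smul, smul_eq_mul, smul_eq_mul] at hprop
  rw [← coeffAt_heckeSymmetrizer_last hT h₀ hκ hE, ← principalEval_heckeSymmetrizer_last hT h₀ h₁,
    mul_assoc, ← hprop, mul_left_comm]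

theorem principalEval_mul_hP {T : ℕ → P (N + 1) →ₗ[K] P (N + 1)} (hT : IsDL (N + 1) t T)
    (hκ : Antitone κ) {f : P (N + 1)} (hf : f.IsSymmetric)
    (hYf : (∑ i, Yop (N + 1) q t T i) f = symmEigenvalue q t κ • f) :
    principalEval t f * hP (N + 1) κ =
      coeffAt κ f * (t ^ lTot (N + 1) κ * bP (N + 1) κ) := by
  have hqt := isGeneric_q_t
  obtain ⟨E, hE, hformula⟩ := exists_isNonsymmMacdonald hT hqt (κ ∘ Fin.rev)
  have hfE := mul_principalEval_of_isNonsymmMacdonald hT hqt.t_ne_zero hqt.t_ne_one hqt.q_ne_zero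
    hκ (fun μ h => symmEigenvalue_q_t_injective h) hf hYf hE
  have hhook := hookProd_comp_rev hκ
  have hbox := boxProd_comp_rev hκ
  rw [EvaluationFormula, lTot_comp_rev hκ, pow_add] at hformula
  set s := t ^ ∑ i, (N + 1 - colLength κ (κ i))
  set D := ∏ i : Fin (N + 1), (1 - q ^ κ i * t ^ (N + 1 - i : ℕ))
  set A := ∏ i : Fin (N + 1), (1 - t ^ (N + 1 - i : ℕ))
  set M := ∏ i : Fin (N + 1), (1 - t ^ (colLength κ (κ i) - i))
  have hs : s ≠ 0 := pow_ne_zero _ hqt.t_ne_zero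
  have hD : D ≠ 0 := prod_ne_zero_iff.2 fun i _ =>
    sub_ne_zero.2 (hqt.pow_mul_pow_ne_one _ _ (by lia)).symm
  refine mul_right_cancel₀ (mul_ne_zero hs hD) ?_
  calc principalEval t f * hP (N + 1) κ * (s * D)
      = principalEval t f * s * (hP (N + 1) κ * D) := by ring
    _ = hookProd q t (κ ∘ Fin.rev) * (s * M * principalEval t f) := by rw [← hhook]; ring
    _ = coeffAt κ f * A * (principalEval t E * hookProd q t (κ ∘ Fin.rev)) := by rw [hfE]; ring
    _ = coeffAt κ f * t ^ lTot (N + 1) κ * s * (boxProd q t (κ ∘ Fin.rev) * A) := by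
      rw [hformula]; ring
    _ = coeffAt κ f * (t ^ lTot (N + 1) κ * bP (N + 1) κ) * (s * D) := by rw [hbox]; ring

end Evaluation

end MacdonaldEvaluation

theorem stmt_19 (n : ℕ) (κ : Fin n → ℕ) (hκ : Antitone κ)
    (T : ℕ → P n →ₗ[K] P n) (hT : IsDL n t T)
    (Pp : P n) (hPp : IsSymMac n q t T κ Pp) :
    eval (fun i : Fin n => t ^ (i : ℕ)) Pp * hP n κ = t ^ lTot n κ * bP n κ := by
  obtain ⟨hsymm, hcoeff, -, hY⟩ := hPp
  cases n with
  | zero =>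
    have hPp : Pp = 1 := by
      rw [eq_C_of_isEmpty Pp, ← C_1, ← hcoeff]
      congr
      exact Subsingleton.elim _ _
    simp [hPp, hP, bP, lTot]
  | succ N =>
    have h := MacdonaldEvaluation.principalEval_mul_hP hT hκ hsymm hY
    rwa [MacdonaldEvaluation.coeffAt, lcoeff_apply, hcoeff, one_mul] at h
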